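/- arXiv:2512.18377 — 5 statements merged into one kernel-verified Lean document; each statement's English description precedes it below -/
import Mathlib

section
/- Let X be a Banach space, T > 0, F ∈ C^6([0,T] × X, X) satisfying ‖F(t,x) − F(t,y)‖ ≤ μ‖x − y‖ for some μ ≥ 0 and all (t,x,y) ∈ [0,T] × X × X, and suppose the initial value problem u'(t) = F(t, u(t)) on [0,T], u(0) = u₀, has a unique solution u ∈ C^7([0,T], X). Then there exist constants C > 0 and k₀ > 0 such that for every positive integer N with k = T/N ≤ k₀, the DC6RK2/4 sequence {u^{6,n}} satisfies, for every n = 0, 1, …, N − 1, the recursion ‖u^{6,n+1} − u(t_{n+1})‖ ≤ (1 + μk + (1/2)μ²k²)·‖u^{6,n} − u(t_n)‖ + C k^7, where t_n = nk. -/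
open Finset

variable {X : Type*} [NormedAddCommGroup X] [NormedSpace ℝ X] [CompleteSpace X]

/-- One step of the classical fourth-order Runge–Kutta method for `u' = F(t,u)`
from time `t` with step `h`. -/
noncomputable def rk4Step (F : ℝ → X → X) (t h : ℝ) (x : X) : X :=
  let K1 := F t x
  let K2 := F (t + h / 2) (x + (h / 2) • K1)
  let K3 := F (t + h / 2) (x + (h / 2) • K2)
  let K4 := F (t + h) (x + h • K3)
  x + (h / 6) • (K1 + (2 : ℝ) • K2 + (2 : ℝ) • K3 + K4)

/-- `i` steps of RK4 with step `h`, starting from `x` at time `t`: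
`rk4Iter F t h x i` is the approximation `u^{4,·,i}` of `u(t + i h)`. -/
noncomputable def rk4Iter (F : ℝ → X → X) (t h : ℝ) (x : X) : ℕ → X
  | 0 => x
  | i + 1 => rk4Step F (t + (i : ℝ) * h) h (rk4Iter F t h x i)

/-- The correction term `aₙ` of the DC6RK2/4 scheme, as a linear combination of the
six RK4 sub-step values `w 0, …, w 5`. -/
noncomputable def dcA (w : ℕ → X) : X :=
  (125 / 384 : ℝ) • ((-3 : ℝ) • w 0 - w 1 + (18 : ℝ) • w 2 - (18 : ℝ) • w 3
    + w 4 + (3 : ℝ) • w 5)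

/-- The correction term `bₙ` of the DC6RK2/4 scheme, as a linear combination of the
six RK4 sub-step values `w 0, …, w 5`. -/
noncomputable def dcB (w : ℕ → X) : X :=
  (25 / 768 : ℝ) • ((145 : ℝ) • w 0 - (387 : ℝ) • w 1 + (402 : ℝ) • w 2
    - (238 : ℝ) • w 3 + (93 : ℝ) • w 4 - (15 : ℝ) • w 5)

/-- One step of the hybrid deferred-correction scheme DC6RK2/4 from time `t` with
step `k` (inner RK4 step `h = k/5`). -/
noncomputable def dcStep (F : ℝ → X → X) (t k : ℝ) (x : X) : X :=
  let w : ℕ → X := rk4Iter F t (k / 5) x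
  x + dcA w + k • F (t + k / 2) (x + (k / 2) • F t x + dcB w)

/-- The DC6RK2/4 sequence `u^{6,n}` for `u' = F(t,u)`, `u(0) = u₀`, with step `k`. -/
noncomputable def dcSeq (F : ℝ → X → X) (u0 : X) (k : ℝ) : ℕ → X
  | 0 => u0
  | n + 1 => dcStep F ((n : ℝ) * k) k (dcSeq F u0 k n)

/-!
Write `P` for the local error of the classical Runge–Kutta method in the first of the five sub-steps
of length `k / 5`. It has an expansion `h⁵ c₄(t) + h⁶ c₅(t) + O(h⁷)` in `h = k / 5` with smooth
coefficients, so the local errors of the later sub-steps differ from `P` by increments linear in the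
index, up to `O(k⁷)`. Adding the propagation of earlier errors, which to first order is by the
Jacobian along the solution, the error after `i` sub-steps is `i P + (i (i - 1) / 2) Q + O(k⁷)` with
`Q = O(k⁶)`. The combination `dcA` annihilates quadratic sequences in `i` and `dcB` linear ones, and
on exact values both have the required Taylor order; hence one step of the deferred-correction
scheme from the exact solution has error `O(k⁷)`.

Since `F` is Lipschitz near the compact graph of the solution, a step started near the solution
amplifies the deviation by a factor `1 + O(k)`. A discrete Grönwall argument then gives an error
`eₙ = O(k⁶)` at all times, so the extra term `O(k) ‖eₙ‖` in the one-step bound is itself `O(k⁷)`: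
the amplification factor can be taken to be `1`.
-/

open Asymptotics Filter Topology

section Asymptotics

variable {ι E : Type*} [NormedAddCommGroup E] [NormedSpace ℝ E] {l : Filter ι} {η : ι → ℝ}
  {f : ι → E} {m n : ℕ}

theorem isBigO_pow_pow_of_tendsto_zero (hη : Tendsto η l (𝓝 0)) (hnm : n ≤ m) :
    (fun i => η i ^ m) =O[l] fun i => η i ^ n := by
  obtain rfl | hlt := hnm.eq_or_lt
  · exact isBigO_refl _ _
  · exact (isLittleO_pow_pow hlt).isBigO.comp_tendsto hη

theorem isBigO_pow_smul (m : ℕ) (hf : f =O[l] fun i => η i ^ n) :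
    (fun i => η i ^ m • f i) =O[l] fun i => η i ^ (m + n) :=
  ((isBigO_refl (fun i => η i ^ m) l).smul hf).congr_right fun i => by rw [smul_eq_mul, pow_add]

theorem isBigO_const_mul_smul (a : ℝ) (hf : f =O[l] fun i => η i ^ n) :
    (fun i => (a * η i) • f i) =O[l] fun i => η i ^ (n + 1) :=
  (((isBigO_refl η l).const_mul_left a).smul hf).congr_right fun i => by
    rw [smul_eq_mul, pow_succ']

theorem isBigO_of_sub_isBigO_mul_norm {G : Type*} [SeminormedAddCommGroup G] {f g : ι → G}
    (hη : Tendsto η l (𝓝 0)) (hfg : (fun i => f i - g i) =O[l] fun i => η i * ‖g i‖) :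
    f =O[l] g := by
  have hsmall := (hη.isBigO_one ℝ).mul (isBigO_refl (fun i => ‖g i‖) l)
  simpa using (hfg.trans (by simpa using hsmall)).add (isBigO_refl g l)

theorem isBigO_one_of_continuousOn {Y E : Type*} [TopologicalSpace Y] [SeminormedAddCommGroup E]
    {f : Y → E} {s : Set Y} (hs : IsCompact s) (hf : ContinuousOn f s) {y : ι → Y}
    (hy : ∀ᶠ i in l, y i ∈ s) : (fun i => f (y i)) =O[l] fun _ => (1 : ℝ) := by
  obtain ⟨C, hC⟩ := hs.exists_bound_of_continuousOn hf
  exact IsBigO.of_bound C (hy.mono fun i hi => by simpa using hC _ hi)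

theorem eq_zero_of_isBigO_sum_pow_smul (c : ℕ → E)
    (hc : (fun h : ℝ => ∑ j ∈ range n, h ^ j • c j) =O[𝓝[>] 0] fun h => h ^ n) :
    ∀ j < n, c j = 0 := by
  induction n generalizing c with
  | zero => simp
  | succ n ih =>
    have hzero : Tendsto (fun h : ℝ => h) (𝓝[>] 0) (𝓝 0) := tendsto_id.mono_left nhdsWithin_le_nhds
    have hsplit : ∀ h : ℝ, ∑ j ∈ range (n + 1), h ^ j • c j
        = h • (∑ j ∈ range n, h ^ j • c (j + 1)) + c 0 := fun h => by
      simp only [sum_range_succ', smul_sum, smul_smul, pow_succ', pow_zero, one_smul]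
    have hconst : c 0 = 0 := by
      have hlim : Tendsto (fun h : ℝ => ∑ j ∈ range (n + 1), h ^ j • c j) (𝓝[>] 0) (𝓝 (c 0)) := by
        have hcont : Continuous fun h : ℝ => ∑ j ∈ range (n + 1), h ^ j • c j := by fun_prop
        simpa [hsplit] using (hcont.tendsto 0).mono_left nhdsWithin_le_nhds
      refine tendsto_nhds_unique hlim (hc.trans_tendsto ?_)
      simpa using hzero.pow (n + 1)
    have htail : (fun h : ℝ => ∑ j ∈ range n, h ^ j • c (j + 1)) =O[𝓝[>] 0] fun h => h ^ n := by
      refine ((isBigO_refl (fun h : ℝ => h⁻¹) _).smul hc).congr' ?_ ?_ <;>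
        filter_upwards [self_mem_nhdsWithin] with h (hh : 0 < h)
      · rw [hsplit, hconst, add_zero, inv_smul_smul₀ hh.ne']
      · rw [smul_eq_mul, pow_succ']
        field_simp
    rintro (_ | j) hj
    · exact hconst
    · exact ih _ htail j (by lia)

end Asymptotics

section DirectionalTaylor

variable {V E : Type*} [NormedAddCommGroup V] [NormedSpace ℝ V] [NormedAddCommGroup E]
  [NormedSpace ℝ E] {S : Set V} {f : V → E} {n : ℕ}

/-- The derivative of `f` within `S` along the constant vector field `v`, as an operator on
functions, so that its iterates applied to `f` are the Taylor coefficients of `f` in the direction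
`v`. Unlike `lineDerivWithin`, it is meaningful at boundary points `p` of `S` at which the line
through `p` in the direction `v` meets `S` only in `p`. -/
noncomputable def dirDerivWithin (S : Set V) (v : V) (f : V → E) : V → E :=
  fun p => fderivWithin ℝ f S p v

theorem contDiffOn_iterate_dirDerivWithin (hS : UniqueDiffOn ℝ S) (v : V) {m j : ℕ}
    (hf : ContDiffOn ℝ (m + j : ℕ) f S) : ContDiffOn ℝ m ((dirDerivWithin S v)^[j] f) S := by
  induction j generalizing f with
  | zero => exact hf
  | succ j ih =>
    exact ih ((hf.fderivWithin hS (m := (m + j : ℕ)) (by norm_cast)).clm_apply contDiffOn_const)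

theorem iteratedDerivWithin_comp_add_smul (hS : UniqueDiffOn ℝ S) {p v : V} {h : ℝ} (hh : 0 < h)
    (hseg : ∀ s ∈ Set.Icc 0 h, p + s • v ∈ S) {j : ℕ} (hf : ContDiffOn ℝ j f S) :
    ∀ s ∈ Set.Icc 0 h, iteratedDerivWithin j (fun s => f (p + s • v)) (Set.Icc 0 h) s
      = (dirDerivWithin S v)^[j] f (p + s • v) := by
  induction j with
  | zero => simp
  | succ j ih =>
    intro s hs
    have hdiff : DifferentiableWithinAt ℝ ((dirDerivWithin S v)^[j] f) S (p + s • v) :=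
      (contDiffOn_iterate_dirDerivWithin (m := 1) hS v
        (hf.of_le (by norm_cast; lia))).differentiableOn one_ne_zero _ (hseg s hs)
    have hline : HasDerivWithinAt (fun s : ℝ => p + s • v) v (Set.Icc 0 h) s := by
      simpa using ((hasDerivWithinAt_id s (Set.Icc 0 h)).smul_const v).const_add p
    have hcomp := hdiff.hasFDerivWithinAt.comp_hasDerivWithinAt s hline hseg
    have ih := ih (hf.of_le (by norm_cast; lia))
    rw [iteratedDerivWithin_succ, derivWithin_congr ih (ih s hs),
      Function.iterate_succ_apply']
    exact hcomp.derivWithin (uniqueDiffOn_Icc hh s hs)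

theorem exists_norm_sub_dirTaylor_le (hS : UniqueDiffOn ℝ S) (hconv : Convex ℝ S)
    (hcomp : IsCompact S) (v : V) (hf : ContDiffOn ℝ n f S) :
    ∃ M, ∀ p ∈ S, ∀ h : ℝ, 0 ≤ h → p + h • v ∈ S →
      ‖f (p + h • v) - ∑ j ∈ range n, (h ^ j / j.factorial) • (dirDerivWithin S v)^[j] f p‖
        ≤ M * h ^ n := by
  obtain ⟨M, hM⟩ := hcomp.exists_bound_of_continuousOn
    (contDiffOn_iterate_dirDerivWithin (m := 0) hS v (by simpa using hf)).continuousOn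
  obtain _ | n := n
  · exact ⟨M, fun p _ h _ hph => by simpa using hM _ hph⟩
  refine ⟨M / n.factorial, fun p hp h hh hph => ?_⟩
  obtain rfl | hh := hh.eq_or_lt
  · simp [sum_range_succ']
  have hseg : ∀ s ∈ Set.Icc 0 h, p + s • v ∈ S := fun s hs => by
    simpa [smul_smul, hh.ne'] using hconv.add_smul_mem hp hph (t := s / h)
      ⟨div_nonneg hs.1 hh.le, div_le_one_of_le₀ hs.2 hh.le⟩
  have hsmooth : ContDiffOn ℝ (n + 1 : ℕ) (fun s : ℝ => f (p + s • v)) (Set.Icc 0 h) :=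
    hf.comp (by fun_prop) hseg
  have hcoeff : ∀ j ≤ n + 1, ∀ s ∈ Set.Icc 0 h,
      iteratedDerivWithin j (fun s => f (p + s • v)) (Set.Icc 0 h) s
        = (dirDerivWithin S v)^[j] f (p + s • v) := fun j hj =>
    iteratedDerivWithin_comp_add_smul hS hh hseg (hf.of_le (by exact_mod_cast hj))
  have htaylor := taylor_mean_remainder_bound hh.le (by exact_mod_cast hsmooth)
    (Set.right_mem_Icc.2 hh.le) fun s hs => by
      rw [hcoeff _ le_rfl s hs]
      exact hM _ (hseg s hs)
  rw [taylor_within_apply, sub_zero, mul_div_right_comm] at htaylor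
  convert! htaylor using 3
  refine sum_congr rfl fun j hj => ?_
  rw [hcoeff j (mem_range.1 hj).le 0 (Set.left_mem_Icc.2 hh.le), zero_smul, add_zero,
    div_eq_inv_mul]

end DirectionalTaylor

section SmallStep

variable {T : ℝ}

/-- The pairs `(t, k)` for which a step of length `k` started at time `t` stays inside `[0, T]`. -/
def stepDomain (T : ℝ) : Set (ℝ × ℝ) := {p | 0 ≤ p.1 ∧ 0 ≤ p.2 ∧ p.1 + p.2 ≤ T}

/-- The filter on pairs `(t, k)` along which the step length `k` tends to `0` inside
`stepDomain T`; a Landau symbol along it is uniform in the time `t`. -/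
def smallStep (T : ℝ) : Filter (ℝ × ℝ) := comap Prod.snd (𝓝 0) ⊓ 𝓟 (stepDomain T)

theorem convex_stepDomain (T : ℝ) : Convex ℝ (stepDomain T) :=
  (convex_halfSpace_ge (f := Prod.fst) ⟨fun _ _ => rfl, fun _ _ => rfl⟩ 0).inter <|
    (convex_halfSpace_ge (f := Prod.snd) ⟨fun _ _ => rfl, fun _ _ => rfl⟩ 0).inter <|
      convex_halfSpace_le (LinearMap.fst ℝ ℝ ℝ + LinearMap.snd ℝ ℝ ℝ).isLinear T

theorem add_mul_mem_Icc {d : ℝ} (hd0 : 0 ≤ d) (hd1 : d ≤ 1) {p : ℝ × ℝ} (hp : p ∈ stepDomain T) :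
    p.1 + d * p.2 ∈ Set.Icc 0 T := by
  obtain ⟨ht, hk, hT⟩ := hp
  exact ⟨by positivity, by linarith [mul_le_of_le_one_left hk hd1]⟩

theorem fst_mem_Icc_of_mem_stepDomain {p : ℝ × ℝ} (hp : p ∈ stepDomain T) : p.1 ∈ Set.Icc 0 T := by
  simpa using add_mul_mem_Icc le_rfl zero_le_one hp

theorem isCompact_stepDomain (T : ℝ) : IsCompact (stepDomain T) := by
  have hclosed : IsClosed (stepDomain T) :=
    (isClosed_le continuous_const continuous_fst).inter <|
      (isClosed_le continuous_const continuous_snd).inter <|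
        isClosed_le (continuous_fst.add continuous_snd) continuous_const
  refine (isCompact_Icc.prod isCompact_Icc).of_isClosed_subset hclosed
    (s := Set.Icc 0 T ×ˢ Set.Icc 0 T) fun p hp => ⟨fst_mem_Icc_of_mem_stepDomain hp, hp.2.1, ?_⟩
  linarith [hp.1, hp.2.2]

theorem uniqueDiffOn_stepDomain (hT : 0 < T) : UniqueDiffOn ℝ (stepDomain T) := by
  refine uniqueDiffOn_convex (convex_stepDomain T) ⟨(T / 3, T / 3), mem_interior.2
    ⟨{p | 0 < p.1 ∧ 0 < p.2 ∧ p.1 + p.2 < T}, fun p hp => ⟨hp.1.le, hp.2.1.le, hp.2.2.le⟩, ?_, ?_⟩⟩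
  · exact (isOpen_lt continuous_const continuous_fst).inter <|
      (isOpen_lt continuous_const continuous_snd).inter <|
        isOpen_lt (continuous_fst.add continuous_snd) continuous_const
  · exact ⟨by positivity, by positivity, by linarith⟩

theorem eventually_mem_stepDomain (T : ℝ) : ∀ᶠ p in smallStep T, p ∈ stepDomain T :=
  (inf_le_right : smallStep T ≤ _) (mem_principal_self _)

theorem eventually_add_mul_mem_Icc {d : ℝ} (hd0 : 0 ≤ d) (hd1 : d ≤ 1) :
    ∀ᶠ p in smallStep T, p.1 + d * p.2 ∈ Set.Icc 0 T :=
  (eventually_mem_stepDomain T).mono fun _ => add_mul_mem_Icc hd0 hd1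

theorem eventually_fst_mem_Icc (T : ℝ) : ∀ᶠ p in smallStep T, p.1 ∈ Set.Icc 0 T :=
  (eventually_mem_stepDomain T).mono fun _ => fst_mem_Icc_of_mem_stepDomain

theorem tendsto_snd_smallStep (T : ℝ) : Tendsto Prod.snd (smallStep T) (𝓝 0) :=
  tendsto_comap.mono_left inf_le_left

theorem tendsto_shift_smallStep {d b : ℝ} (hd : 0 ≤ d) (hb : 0 ≤ b) (hdb : d + b ≤ 1) :
    Tendsto (fun p : ℝ × ℝ => (p.1 + d * p.2, b * p.2)) (smallStep T) (smallStep T) := by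
  refine tendsto_inf.2 ⟨tendsto_comap_iff.2 ?_, tendsto_principal.2 ?_⟩
  · simpa [Function.comp_def] using (tendsto_snd_smallStep T).const_mul b
  · filter_upwards [eventually_mem_stepDomain T] with p ⟨ht, hk, hT⟩
    refine ⟨?_, ?_, ?_⟩ <;> dsimp only
    · positivity
    · positivity
    · linarith [mul_le_of_le_one_left hk hdb]

theorem hasBasis_smallStep (T : ℝ) :
    (smallStep T).HasBasis (fun k0 : ℝ => 0 < k0) fun k0 => {p | p.2 ≤ k0} ∩ stepDomain T := by
  refine ((Metric.nhds_basis_closedBall.comap Prod.snd).inf_principal (stepDomain T)).to_hasBasis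
    ?_ ?_ <;> refine fun k0 hk0 => ⟨k0, hk0, fun p hp => ⟨?_, hp.2⟩⟩
  · simpa [abs_of_nonneg hp.2.2.1] using hp.1
  · exact (le_abs_self p.2).trans (by simpa using hp.1)

end SmallStep

section CurveTaylor

variable {E : Type*} [NormedAddCommGroup E] [NormedSpace ℝ E] {T : ℝ} {f u v : ℝ → E} {n : ℕ}

theorem iterate_dirDerivWithin_one (s : Set ℝ) (f : ℝ → E) (j : ℕ) :
    (dirDerivWithin s 1)^[j] f = iteratedDerivWithin j f s :=
  funext fun _ => iteratedDerivWithin_eq_iterate.symm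

theorem contDiffOn_iteratedDerivWithin {s : Set ℝ} (hs : UniqueDiffOn ℝ s) {m j : ℕ}
    (hf : ContDiffOn ℝ (m + j : ℕ) f s) : ContDiffOn ℝ m (iteratedDerivWithin j f s) s := by
  rw [← iterate_dirDerivWithin_one]
  exact contDiffOn_iterate_dirDerivWithin hs 1 hf

theorem isBigO_sub_taylor (hT : 0 < T) (hf : ContDiffOn ℝ n f (Set.Icc 0 T)) {d : ℝ} (hd0 : 0 ≤ d)
    (hd1 : d ≤ 1) :
    (fun p : ℝ × ℝ => f (p.1 + d * p.2) - ∑ j ∈ range n,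
      ((d * p.2) ^ j / j.factorial) • iteratedDerivWithin j f (Set.Icc 0 T) p.1)
      =O[smallStep T] fun p => p.2 ^ n := by
  obtain ⟨M, hM⟩ := exists_norm_sub_dirTaylor_le (uniqueDiffOn_Icc hT) (convex_Icc 0 T)
    isCompact_Icc 1 hf
  refine IsBigO.of_bound (M * d ^ n) ?_
  filter_upwards [eventually_mem_stepDomain T] with p hp
  have hbound := hM p.1 (fst_mem_Icc_of_mem_stepDomain hp) (d * p.2) (mul_nonneg hd0 hp.2.1)
    (by simpa using add_mul_mem_Icc hd0 hd1 hp)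
  simpa [iterate_dirDerivWithin_one, mul_pow, mul_assoc, abs_of_nonneg hp.2.1] using hbound

theorem eqOn_iteratedDerivWithin_succ_of_hasDerivWithinAt {s : Set ℝ} (hs : UniqueDiffOn ℝ s)
    (hv : ∀ t ∈ s, HasDerivWithinAt u (v t) s t) (j : ℕ) :
    Set.EqOn (iteratedDerivWithin (j + 1) u s) (iteratedDerivWithin j v s) s := by
  intro t ht
  rw [iteratedDerivWithin_succ']
  exact iteratedDerivWithin_congr (fun x hx => (hv x hx).derivWithin (hs x hx)) ht

theorem contDiffOn_succ_of_hasDerivWithinAt {s : Set ℝ} (hs : UniqueDiffOn ℝ s)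
    (hv : ∀ t ∈ s, HasDerivWithinAt u (v t) s t) (hvn : ContDiffOn ℝ n v s) :
    ContDiffOn ℝ (n + 1 : ℕ) u s :=
  (contDiffOn_succ_iff_derivWithin (n := n) hs).2
    ⟨fun t ht => (hv t ht).differentiableWithinAt, by simp,
      hvn.congr fun t ht => (hv t ht).derivWithin (hs t ht)⟩

theorem isBigO_sub_taylor_of_hasDerivWithinAt (hT : 0 < T)
    (hv : ∀ t ∈ Set.Icc 0 T, HasDerivWithinAt u (v t) (Set.Icc 0 T) t)
    (hvn : ContDiffOn ℝ n v (Set.Icc 0 T)) {d : ℝ} (hd0 : 0 ≤ d) (hd1 : d ≤ 1) :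
    (fun p : ℝ × ℝ => u (p.1 + d * p.2) - u p.1 - ∑ j ∈ range n,
      ((d * p.2) ^ (j + 1) / (j + 1).factorial) • iteratedDerivWithin j v (Set.Icc 0 T) p.1)
      =O[smallStep T] fun p => p.2 ^ (n + 1) := by
  have hu := contDiffOn_succ_of_hasDerivWithinAt (uniqueDiffOn_Icc hT) hv hvn
  refine (isBigO_sub_taylor hT hu hd0 hd1).congr' ?_ EventuallyEq.rfl
  filter_upwards [eventually_fst_mem_Icc T] with p hp
  have hderiv := fun j =>
    eqOn_iteratedDerivWithin_succ_of_hasDerivWithinAt (uniqueDiffOn_Icc hT) hv j hp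
  simp [sum_range_succ', hderiv, sub_sub, add_comm]

end CurveTaylor

section LinearisationNearCompact

variable {ι V E : Type*} [NormedAddCommGroup V] [NormedSpace ℝ V] [NormedAddCommGroup E]
  [NormedSpace ℝ E] {S K : Set V} {G : V → E} {l : Filter ι} {q x y : ι → V} {r : ι → ℝ}

theorem exists_norm_sub_le_near_compact (hS : Convex ℝ S) (hG : ContDiffOn ℝ 1 G S)
    (hK : IsCompact K) (hKS : K ⊆ S) :
    ∃ L : ℝ, 0 ≤ L ∧ ∃ ε > 0, ∀ q ∈ K, ∀ x ∈ S, ∀ y ∈ S, dist x q < ε → dist y q < ε →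
      ‖G x - G y‖ ≤ L * ‖x - y‖ := by
  refine hK.induction_on (p := fun K => ∃ L : ℝ, 0 ≤ L ∧ ∃ ε > 0, ∀ q ∈ K, ∀ x ∈ S, ∀ y ∈ S,
    dist x q < ε → dist y q < ε → ‖G x - G y‖ ≤ L * ‖x - y‖) ?_ ?_ ?_ ?_
  · exact ⟨0, le_rfl, 1, one_pos, by simp⟩
  · rintro A B hAB ⟨L, hL, ε, hε, h⟩
    exact ⟨L, hL, ε, hε, fun q hq => h q (hAB hq)⟩
  · rintro A B ⟨L, hL, ε, hε, hA⟩ ⟨L', -, ε', hε', hB⟩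
    refine ⟨max L L', le_max_of_le_left hL, min ε ε', lt_min hε hε', ?_⟩
    simp only [lt_min_iff]
    rintro q (hq | hq) x hx y hy ⟨hxq, hxq'⟩ ⟨hyq, hyq'⟩
    · exact (hA q hq x hx y hy hxq hyq).trans (by gcongr; exact le_max_left _ _)
    · exact (hB q hq x hx y hy hxq' hyq').trans (by gcongr; exact le_max_right _ _)
  · intro q hq
    obtain ⟨L, W, hW, hlip⟩ := (hG q (hKS hq)).exists_lipschitzOnWith hS
    obtain ⟨ε, hε, hsub⟩ := Metric.mem_nhdsWithin_iff.1 hW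
    refine ⟨Metric.ball q (ε / 2),
      mem_nhdsWithin_of_mem_nhds (Metric.ball_mem_nhds _ (half_pos hε)), L, L.2, ε / 2, half_pos hε,
      fun q' hq' x hx y hy hxq' hyq' => ?_⟩
    have hmem : ∀ z ∈ S, dist z q' < ε / 2 → z ∈ W := fun z hz hzq' =>
      hsub ⟨by simpa using (dist_triangle z q' q).trans_lt (add_lt_add hzq' hq'), hz⟩
    exact hlip.norm_sub_le (hmem x hx hxq') (hmem y hy hyq')

theorem isBigO_sub_near_compact (hS : Convex ℝ S) (hG : ContDiffOn ℝ 1 G S) (hK : IsCompact K)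
    (hKS : K ⊆ S) (hq : ∀ᶠ i in l, q i ∈ K) (hx : ∀ᶠ i in l, x i ∈ S) (hy : ∀ᶠ i in l, y i ∈ S)
    (hxq : Tendsto (fun i => x i - q i) l (𝓝 0)) (hyq : Tendsto (fun i => y i - q i) l (𝓝 0)) :
    (fun i => G (x i) - G (y i)) =O[l] fun i => x i - y i := by
  obtain ⟨L, -, ε, hε, hL⟩ := exists_norm_sub_le_near_compact hS hG hK hKS
  refine IsBigO.of_bound L ?_
  filter_upwards [hq, hx, hy, hxq.eventually (Metric.ball_mem_nhds 0 hε),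
    hyq.eventually (Metric.ball_mem_nhds 0 hε)] with i hq hx hy hxq hyq
  exact hL _ hq _ hx _ hy (by simpa [dist_eq_norm] using hxq) (by simpa [dist_eq_norm] using hyq)

theorem isBigO_sub_sub_fderivWithin_near_compact (hS : Convex ℝ S) (hS' : UniqueDiffOn ℝ S)
    (hG : ContDiffOn ℝ 2 G S) (hK : IsCompact K) (hKS : K ⊆ S) (hr : Tendsto r l (𝓝 0))
    (hq : ∀ᶠ i in l, q i ∈ K) (hx : ∀ᶠ i in l, x i ∈ S) (hy : ∀ᶠ i in l, y i ∈ S)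
    (hxq : (fun i => x i - q i) =O[l] r) (hyq : (fun i => y i - q i) =O[l] r) :
    (fun i => G (x i) - G (y i) - fderivWithin ℝ G S (q i) (x i - y i))
      =O[l] fun i => r i * ‖x i - y i‖ := by
  obtain ⟨L, hL0, ε, hε, hL⟩ := exists_norm_sub_le_near_compact hS
    (hG.fderivWithin hS' (m := 1) (by norm_num)) hK hKS
  obtain ⟨C, hC⟩ := (hxq.norm_left.add hyq.norm_left).bound
  have hsmall : ∀ᶠ i in l, C * ‖r i‖ < ε := by
    have hlim : Tendsto (fun i => C * ‖r i‖) l (𝓝 0) := by simpa using hr.norm.const_mul C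
    exact hlim.eventually_lt_const hε
  refine IsBigO.of_bound (L * C) ?_
  filter_upwards [hq, hx, hy, hC, hsmall] with i hq hx hy hC hsmall
  rw [Real.norm_of_nonneg (by positivity)] at hC
  have hmeanvalue := (hS.inter (convex_closedBall (q i) (C * ‖r i‖)))
    |>.norm_image_sub_le_of_norm_hasFDerivWithin_le' (φ := fderivWithin ℝ G S (q i))
      (C := L * (C * ‖r i‖)) (x := y i) (y := x i)
      (fun z hz => ((hG.differentiableOn two_ne_zero) z hz.1).hasFDerivWithinAt.mono
        Set.inter_subset_left)
      (fun z ⟨hz, hzq⟩ => (hL _ hq z hz _ (hKS hq) (hzq.trans_lt hsmall) (by simpa using hε)).trans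
        (by gcongr; rwa [← dist_eq_norm]))
      ⟨hy, by rw [mem_closedBall_iff_norm]; linarith [norm_nonneg (x i - q i)]⟩
      ⟨hx, by rw [mem_closedBall_iff_norm]; linarith [norm_nonneg (y i - q i)]⟩
  simpa [mul_assoc] using hmeanvalue

end LinearisationNearCompact

section SmoothSolution

variable {ι E : Type*} [NormedAddCommGroup E] [NormedSpace ℝ E] {T : ℝ} {F : ℝ → E → E}
  {u : ℝ → E} {n : ℕ}

/-- `u` solves `u' = F(t, u)` on `[0, T]`, with one-sided derivatives at the endpoints, and the
right-hand side `F` is of class `Cⁿ` on `[0, T] × E`. -/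
structure IsSolution (n : ℕ) (T : ℝ) (F : ℝ → E → E) (u : ℝ → E) : Prop where
  pos : 0 < T
  contDiffOn : ContDiffOn ℝ n (Function.uncurry F) (Set.Icc 0 T ×ˢ Set.univ)
  hasDerivWithinAt : ∀ t ∈ Set.Icc 0 T, HasDerivWithinAt u (F t (u t)) (Set.Icc 0 T) t

/-- The Jacobian `∂F/∂x` at the point `(t, u t)` of the graph of `u`; the derivative is taken
within `[0, T] × E` because `F` is only assumed to be smooth there. -/
noncomputable def jacobianAlong (T : ℝ) (F : ℝ → E → E) (u : ℝ → E) (t : ℝ) : E →L[ℝ] E :=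
  (fderivWithin ℝ (Function.uncurry F) (Set.Icc 0 T ×ˢ Set.univ) (t, u t)).comp
    (ContinuousLinearMap.inr ℝ ℝ E)

/-- The `j`-th derivative on `[0, T]` of the velocity `t ↦ F (t, u t)`, that is, the derivative of
order `j + 1` of a solution `u`. -/
noncomputable def velocityDeriv (T : ℝ) (F : ℝ → E → E) (u : ℝ → E) (j : ℕ) : ℝ → E :=
  iteratedDerivWithin j (fun t => F t (u t)) (Set.Icc 0 T)

theorem velocityDeriv_zero (T : ℝ) (F : ℝ → E → E) (u : ℝ → E) (t : ℝ) :
    velocityDeriv T F u 0 t = F t (u t) := by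
  rw [velocityDeriv, iteratedDerivWithin_zero]

namespace IsSolution

theorem of_le {m : ℕ} (hu : IsSolution n T F u) (hmn : m ≤ n) : IsSolution m T F u :=
  ⟨hu.pos, hu.contDiffOn.of_le (by exact_mod_cast hmn), hu.hasDerivWithinAt⟩

theorem contDiffOn_velocity (hu : IsSolution n T F u) :
    ContDiffOn ℝ n (fun t => F t (u t)) (Set.Icc 0 T) := by
  suffices hun : ContDiffOn ℝ n u (Set.Icc 0 T) from
    hu.contDiffOn.comp (contDiffOn_id.prodMk hun) fun t ht => ⟨ht, trivial⟩
  induction n with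
  | zero => exact contDiffOn_zero.2 fun t ht => (hu.hasDerivWithinAt t ht).continuousWithinAt
  | succ n ih =>
    have hn := hu.of_le n.le_succ
    exact contDiffOn_succ_of_hasDerivWithinAt (uniqueDiffOn_Icc hu.pos) hu.hasDerivWithinAt
      (hn.contDiffOn.comp (contDiffOn_id.prodMk (ih hn)) fun t ht => ⟨ht, trivial⟩)

theorem contDiffOn_curve (hu : IsSolution n T F u) : ContDiffOn ℝ (n + 1 : ℕ) u (Set.Icc 0 T) :=
  contDiffOn_succ_of_hasDerivWithinAt (uniqueDiffOn_Icc hu.pos) hu.hasDerivWithinAt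
    hu.contDiffOn_velocity

theorem isCompact_graph (hu : IsSolution n T F u) :
    IsCompact ((fun t => (t, u t)) '' Set.Icc 0 T) :=
  isCompact_Icc.image_of_continuousOn (continuousOn_id.prodMk hu.contDiffOn_curve.continuousOn)

variable {l : Filter ι} {a b s s' r : ι → ℝ} {z z' f : ι → E}

theorem isBigO_sub_uncurry (hu : IsSolution 1 T F u) (ha : ∀ᶠ i in l, a i ∈ Set.Icc 0 T)
    (hs : ∀ᶠ i in l, s i ∈ Set.Icc 0 T) (hs' : ∀ᶠ i in l, s' i ∈ Set.Icc 0 T)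
    (hsa : Tendsto (fun i => s i - a i) l (𝓝 0)) (hsa' : Tendsto (fun i => s' i - a i) l (𝓝 0))
    (hz : Tendsto (fun i => z i - u (a i)) l (𝓝 0))
    (hz' : Tendsto (fun i => z' i - u (a i)) l (𝓝 0)) :
    (fun i => F (s i) (z i) - F (s' i) (z' i)) =O[l] fun i => (s i - s' i, z i - z' i) :=
  isBigO_sub_near_compact (x := fun i => (s i, z i)) (y := fun i => (s' i, z' i))
    ((convex_Icc 0 T).prod convex_univ) hu.contDiffOn hu.isCompact_graph
    (Set.image_subset_iff.2 fun _ ht => ⟨ht, trivial⟩) (ha.mono fun _ hi => ⟨_, hi, rfl⟩)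
    (hs.mono fun _ hi => ⟨hi, trivial⟩) (hs'.mono fun _ hi => ⟨hi, trivial⟩)
    (hsa.prodMk_nhds hz) (hsa'.prodMk_nhds hz')

theorem isBigO_sub_apply (hu : IsSolution 1 T F u) (ha : ∀ᶠ i in l, a i ∈ Set.Icc 0 T)
    (hs : ∀ᶠ i in l, s i ∈ Set.Icc 0 T) (hsa : Tendsto (fun i => s i - a i) l (𝓝 0))
    (hz : Tendsto (fun i => z i - u (a i)) l (𝓝 0))
    (hz' : Tendsto (fun i => z' i - u (a i)) l (𝓝 0)) :
    (fun i => F (s i) (z i) - F (s i) (z' i)) =O[l] fun i => z i - z' i :=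
  (hu.isBigO_sub_uncurry ha hs hs hsa hsa hz hz').trans <| by
    simpa only [sub_self] using (isBigO_zero (E' := ℝ) _ l).prod_left (isBigO_refl _ l)

theorem isBigO_one_velocity (hu : IsSolution n T F u) (ha : ∀ᶠ i in l, a i ∈ Set.Icc 0 T) :
    (fun i => F (a i) (u (a i))) =O[l] fun _ => (1 : ℝ) :=
  isBigO_one_of_continuousOn isCompact_Icc hu.contDiffOn_velocity.continuousOn ha

theorem isBigO_one_apply (hu : IsSolution 1 T F u) (ha : ∀ᶠ i in l, a i ∈ Set.Icc 0 T)
    (hs : ∀ᶠ i in l, s i ∈ Set.Icc 0 T) (hsa : Tendsto (fun i => s i - a i) l (𝓝 0))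
    (hz : Tendsto (fun i => z i - u (a i)) l (𝓝 0)) :
    (fun i => F (s i) (z i)) =O[l] fun _ => (1 : ℝ) := by
  have hdiff := hu.isBigO_sub_uncurry ha hs ha hsa
    (by simpa using tendsto_const_nhds) hz (z' := fun i => u (a i))
    (by simpa using tendsto_const_nhds)
  simpa using (hdiff.trans ((hsa.isBigO_one ℝ).prod_left (hz.isBigO_one ℝ))).add
    (hu.isBigO_one_velocity ha)

theorem isBigO_sub_sub_jacobianAlong (hu : IsSolution 2 T F u) (hr : Tendsto r l (𝓝 0))
    (ha : ∀ᶠ i in l, a i ∈ Set.Icc 0 T) (hs : ∀ᶠ i in l, s i ∈ Set.Icc 0 T)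
    (hsa : (fun i => s i - a i) =O[l] r) (hz : (fun i => z i - u (a i)) =O[l] r)
    (hz' : (fun i => z' i - u (a i)) =O[l] r) :
    (fun i => F (s i) (z i) - F (s i) (z' i) - jacobianAlong T F u (a i) (z i - z' i))
      =O[l] fun i => r i * ‖z i - z' i‖ := by
  have hlin := isBigO_sub_sub_fderivWithin_near_compact (x := fun i => (s i, z i))
    (y := fun i => (s i, z' i)) ((convex_Icc 0 T).prod convex_univ)
    ((uniqueDiffOn_Icc hu.pos).prod uniqueDiffOn_univ) hu.contDiffOn hu.isCompact_graph
    (Set.image_subset_iff.2 fun _ ht => ⟨ht, trivial⟩) hr (ha.mono fun _ hi => ⟨_, hi, rfl⟩)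
    (hs.mono fun _ hi => ⟨hi, trivial⟩) (hs.mono fun _ hi => ⟨hi, trivial⟩)
    (hsa.prod_left hz) (hsa.prod_left hz')
  simpa [jacobianAlong, Prod.norm_def] using hlin

theorem contDiffOn_jacobianAlong (hu : IsSolution 2 T F u) :
    ContDiffOn ℝ 1 (jacobianAlong T F u) (Set.Icc 0 T) :=
  (((hu.contDiffOn.fderivWithin ((uniqueDiffOn_Icc hu.pos).prod uniqueDiffOn_univ) (m := 1)
    (by norm_num)).comp (contDiffOn_id.prodMk (hu.contDiffOn_curve.of_le (by norm_num)))
    fun _ ht => ⟨ht, trivial⟩).clm_comp contDiffOn_const)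

theorem isBigO_jacobianAlong_apply (hu : IsSolution 2 T F u) (ha : ∀ᶠ i in l, a i ∈ Set.Icc 0 T) :
    (fun i => jacobianAlong T F u (a i) (f i)) =O[l] f := by
  have hbound := isBigO_one_of_continuousOn isCompact_Icc
    hu.contDiffOn_jacobianAlong.continuousOn ha
  have happly : (fun i => jacobianAlong T F u (a i) (f i))
      =O[l] fun i => ‖jacobianAlong T F u (a i)‖ * ‖f i‖ :=
    isBigO_of_le _ fun i => by simpa using (jacobianAlong T F u (a i)).le_opNorm (f i)
  refine (happly.trans (hbound.norm_left.mul (isBigO_refl _ l).norm_right)).trans ?_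
  simpa using isBigO_refl (fun i => ‖f i‖) l

theorem isBigO_jacobianAlong_sub_apply (hu : IsSolution 2 T F u)
    (ha : ∀ᶠ i in l, a i ∈ Set.Icc 0 T) (hb : ∀ᶠ i in l, b i ∈ Set.Icc 0 T) :
    (fun i => jacobianAlong T F u (a i) (f i) - jacobianAlong T F u (b i) (f i))
      =O[l] fun i => (a i - b i) * ‖f i‖ := by
  obtain ⟨L, hL⟩ := hu.contDiffOn_jacobianAlong.exists_lipschitzOnWith one_ne_zero
    (convex_Icc 0 T) isCompact_Icc
  refine IsBigO.of_bound L ?_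
  filter_upwards [ha, hb] with i ha hb
  rw [← sub_apply, norm_mul, norm_norm, ← mul_assoc]
  exact (ContinuousLinearMap.le_opNorm _ _).trans (by gcongr; exact hL.norm_sub_le ha hb)

theorem isBigO_velocity_sub_taylor (hu : IsSolution n T F u) {d : ℝ} (hd : d ∈ Set.Icc 0 1) :
    (fun p : ℝ × ℝ => F (p.1 + d * p.2) (u (p.1 + d * p.2)) - ∑ j ∈ range n,
      ((d * p.2) ^ j / j.factorial) • velocityDeriv T F u j p.1)
      =O[smallStep T] fun p => p.2 ^ n :=
  isBigO_sub_taylor hu.pos hu.contDiffOn_velocity hd.1 hd.2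

theorem isBigO_curve_sub_taylor (hu : IsSolution n T F u) {d : ℝ} (hd : d ∈ Set.Icc 0 1) :
    (fun p : ℝ × ℝ => u (p.1 + d * p.2) - u p.1 - ∑ j ∈ range n,
      ((d * p.2) ^ (j + 1) / (j + 1).factorial) • velocityDeriv T F u j p.1)
      =O[smallStep T] fun p => p.2 ^ (n + 1) :=
  isBigO_sub_taylor_of_hasDerivWithinAt hu.pos hu.hasDerivWithinAt hu.contDiffOn_velocity hd.1 hd.2

end IsSolution

end SmoothSolution

section RungeKutta

variable {ι E : Type*} [NormedAddCommGroup E] [NormedSpace ℝ E] {T : ℝ} {F : ℝ → E → E}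
  {u : ℝ → E} {l : Filter ι} {t h : ι → ℝ} {x y : ι → E}

/-- The nodes `0, 1/2, 1/2, 1` of the classical Runge–Kutta method, as fractions of the step; the
value at indices beyond `3` is irrelevant. -/
noncomputable def rk4Node : ℕ → ℝ
  | 0 => 0
  | 1 => 1 / 2
  | 2 => 1 / 2
  | _ => 1

/-- The points at which the classical Runge–Kutta method evaluates `F` at the times
`t + rk4Node j * h`; the stages `0, 1, 2, 3` are the ones that enter the method. -/
noncomputable def rk4Stage (F : ℝ → E → E) (t h : ℝ) (x : E) : ℕ → E
  | 0 => x
  | j + 1 => x + (rk4Node (j + 1) * h) • F (t + rk4Node j * h) (rk4Stage F t h x j)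

/-- The slopes of the classical Runge–Kutta method: `K₁, …, K₄` have the indices `0, …, 3`. -/
noncomputable def rk4Slope (F : ℝ → E → E) (t h : ℝ) (x : E) (j : ℕ) : E :=
  F (t + rk4Node j * h) (rk4Stage F t h x j)

/-- The mean of four slopes with the weights of the classical Runge–Kutta method. -/
noncomputable def rk4Mean (K : ℕ → E) : E :=
  (1 / 6 : ℝ) • (K 0 + (2 : ℝ) • K 1 + (2 : ℝ) • K 2 + K 3)

theorem isBigO_rk4Mean {G : Type*} [NormedAddCommGroup G] {K : ι → ℕ → E} {g : ι → G}
    (hK : ∀ j, (fun i => K i j) =O[l] g) : (fun i => rk4Mean (K i)) =O[l] g :=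
  ((((hK 0).add ((hK 1).const_smul_left (2 : ℝ))).add ((hK 2).const_smul_left (2 : ℝ))).add
    (hK 3)).const_smul_left (1 / 6 : ℝ)

theorem rk4Node_mem_Icc (j : ℕ) : rk4Node j ∈ Set.Icc (0 : ℝ) 1 := by
  unfold rk4Node
  split <;> norm_num

theorem rk4Stage_succ (F : ℝ → E → E) (t h : ℝ) (x : E) (j : ℕ) :
    rk4Stage F t h x (j + 1) = x + (rk4Node (j + 1) * h) • rk4Slope F t h x j := rfl

theorem rk4Slope_zero (F : ℝ → E → E) (t h : ℝ) (x : E) : rk4Slope F t h x 0 = F t x := by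
  simp [rk4Slope, rk4Stage, rk4Node]

theorem rk4Step_eq_add_smul_rk4Mean (F : ℝ → E → E) (t h : ℝ) (x : E) :
    rk4Step F t h x = x + h • rk4Mean (rk4Slope F t h x) := by
  have htwo : h / 2 = 1 / 2 * h := by ring
  have hsix : h / 6 = h * (1 / 6) := by ring
  simp only [rk4Step, rk4Mean, rk4Slope, rk4Stage, rk4Node, htwo, hsix, mul_smul, zero_mul,
    add_zero, one_mul]

theorem isBigO_const_mul_smul_self (hh : Tendsto h l (𝓝 0)) (c : ℝ) (f : ι → E) :
    (fun i => (c * h i) • f i) =O[l] f := by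
  simpa using ((hh.const_mul c).isBigO_one ℝ).smul (isBigO_refl f l)

theorem tendsto_const_mul_smul_zero {f : ι → E} (hh : Tendsto h l (𝓝 0)) (c : ℝ)
    (hf : f =O[l] fun _ => (1 : ℝ)) : Tendsto (fun i => (c * h i) • f i) l (𝓝 0) :=
  (((isBigO_refl h l).const_mul_left c).smul hf).trans_tendsto (by simpa using hh)

namespace IsSolution

theorem isBigO_one_rk4Slope_of_stage (hu : IsSolution 1 T F u)
    (hth : Tendsto (fun i => (t i, h i)) l (smallStep T)) {j : ℕ}
    (hx : Tendsto (fun i => rk4Stage F (t i) (h i) (x i) j - u (t i)) l (𝓝 0)) :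
    (fun i => rk4Slope F (t i) (h i) (x i) j) =O[l] fun _ => (1 : ℝ) := by
  have hnode := rk4Node_mem_Icc j
  refine hu.isBigO_one_apply (hth.eventually (eventually_fst_mem_Icc T))
    (hth.eventually (eventually_add_mul_mem_Icc hnode.1 hnode.2)) ?_ hx
  simpa using ((tendsto_snd_smallStep T).comp hth).const_mul (rk4Node j)

theorem tendsto_rk4Stage_sub (hu : IsSolution 1 T F u)
    (hth : Tendsto (fun i => (t i, h i)) l (smallStep T))
    (hx : Tendsto (fun i => x i - u (t i)) l (𝓝 0)) (j : ℕ) :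
    Tendsto (fun i => rk4Stage F (t i) (h i) (x i) j - u (t i)) l (𝓝 0) := by
  induction j with
  | zero => exact hx
  | succ j ih =>
    have hstep := tendsto_const_mul_smul_zero ((tendsto_snd_smallStep T).comp hth)
      (rk4Node (j + 1)) (hu.isBigO_one_rk4Slope_of_stage hth ih)
    simpa [rk4Stage_succ, add_sub_right_comm] using hx.add hstep

theorem isBigO_one_rk4Slope (hu : IsSolution 1 T F u)
    (hth : Tendsto (fun i => (t i, h i)) l (smallStep T))
    (hx : Tendsto (fun i => x i - u (t i)) l (𝓝 0)) (j : ℕ) :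
    (fun i => rk4Slope F (t i) (h i) (x i) j) =O[l] fun _ => (1 : ℝ) :=
  hu.isBigO_one_rk4Slope_of_stage hth (hu.tendsto_rk4Stage_sub hth hx j)

theorem isBigO_rk4Slope_sub (hu : IsSolution 1 T F u)
    (hth : Tendsto (fun i => (t i, h i)) l (smallStep T))
    (hx : Tendsto (fun i => x i - u (t i)) l (𝓝 0)) (hy : Tendsto (fun i => y i - u (t i)) l (𝓝 0))
    (j : ℕ) :
    (fun i => rk4Slope F (t i) (h i) (x i) j - rk4Slope F (t i) (h i) (y i) j)
      =O[l] fun i => x i - y i := by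
  have hnode := fun j => rk4Node_mem_Icc j
  have hstage := fun j => hu.isBigO_sub_apply (hth.eventually (eventually_fst_mem_Icc T))
    (hth.eventually (eventually_add_mul_mem_Icc (hnode j).1 (hnode j).2))
    (by simpa using ((tendsto_snd_smallStep T).comp hth).const_mul (rk4Node j))
    (hu.tendsto_rk4Stage_sub hth hx j) (hu.tendsto_rk4Stage_sub hth hy j)
  induction j with
  | zero => exact hstage 0
  | succ j ih =>
    refine (hstage (j + 1)).trans (((isBigO_refl _ l).add ((isBigO_const_mul_smul_self
      ((tendsto_snd_smallStep T).comp hth) (rk4Node (j + 1)) _).trans ih)).congr_left fun i => ?_)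
    simp only [rk4Stage_succ, Function.comp_apply]
    module

theorem isBigO_rk4Stage_sub (hu : IsSolution 1 T F u)
    (hth : Tendsto (fun i => (t i, h i)) l (smallStep T))
    (hx : (fun i => x i - u (t i)) =O[l] h) (j : ℕ) :
    (fun i => rk4Stage F (t i) (h i) (x i) j - u (t i)) =O[l] h := by
  obtain _ | j := j
  · exact hx
  have hslope := hu.isBigO_one_rk4Slope hth
    (hx.trans_tendsto ((tendsto_snd_smallStep T).comp hth)) j
  have hstep : (fun i => (rk4Node (j + 1) * h i) • rk4Slope F (t i) (h i) (x i) j) =O[l] h := by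
    simpa using ((isBigO_refl h l).const_mul_left (rk4Node (j + 1))).smul hslope
  simpa [rk4Stage_succ, add_sub_right_comm] using hx.add hstep

theorem isBigO_rk4Slope_sub_sub_jacobianAlong (hu : IsSolution 2 T F u)
    (hth : Tendsto (fun i => (t i, h i)) l (smallStep T))
    (hx : (fun i => x i - u (t i)) =O[l] h) (hy : (fun i => y i - u (t i)) =O[l] h) (j : ℕ) :
    (fun i => rk4Slope F (t i) (h i) (x i) j - rk4Slope F (t i) (h i) (y i) j
      - jacobianAlong T F u (t i) (x i - y i)) =O[l] fun i => h i * ‖x i - y i‖ := by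
  have hu1 := hu.of_le one_le_two
  have hh : Tendsto h l (𝓝 0) := (tendsto_snd_smallStep T).comp hth
  have ht := hth.eventually (eventually_fst_mem_Icc T)
  have hnode := rk4Node_mem_Icc j
  have hstage : (fun i => rk4Stage F (t i) (h i) (x i) j - rk4Stage F (t i) (h i) (y i) j
      - (x i - y i)) =O[l] fun i => h i * ‖x i - y i‖ := by
    obtain _ | j := j
    · simpa [rk4Stage] using isBigO_zero _ _
    refine (((isBigO_refl h l).const_mul_left (rk4Node (j + 1))).smul (hu1.isBigO_rk4Slope_sub hth
      (hx.trans_tendsto hh) (hy.trans_tendsto hh) j).norm_right).congr_left fun i => ?_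
    simp only [rk4Stage_succ]
    module
  have hstage' := isBigO_of_sub_isBigO_mul_norm hh hstage
  have hlin := hu.isBigO_sub_sub_jacobianAlong hh ht
    (hth.eventually (eventually_add_mul_mem_Icc hnode.1 hnode.2))
    (by simpa using (isBigO_refl h l).const_mul_left (rk4Node j))
    (hu1.isBigO_rk4Stage_sub hth hx j) (hu1.isBigO_rk4Stage_sub hth hy j)
  refine ((hlin.trans ((isBigO_refl h l).mul hstage'.norm_norm)).add
    ((hu.isBigO_jacobianAlong_apply ht).trans hstage)).congr_left fun i => ?_
  simp only [rk4Slope, map_sub]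
  abel

theorem isBigO_rk4Step_sub_sub (hu : IsSolution 1 T F u)
    (hth : Tendsto (fun i => (t i, h i)) l (smallStep T))
    (hx : Tendsto (fun i => x i - u (t i)) l (𝓝 0))
    (hy : Tendsto (fun i => y i - u (t i)) l (𝓝 0)) :
    (fun i => rk4Step F (t i) (h i) (x i) - rk4Step F (t i) (h i) (y i) - (x i - y i))
      =O[l] fun i => h i * ‖x i - y i‖ := by
  refine ((isBigO_refl h l).smul (isBigO_rk4Mean fun j =>
    (hu.isBigO_rk4Slope_sub hth hx hy j).norm_right)).congr_left fun i => ?_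
  simp only [rk4Step_eq_add_smul_rk4Mean, rk4Mean]
  module

theorem isBigO_rk4Step_sub_sub_jacobianAlong (hu : IsSolution 2 T F u)
    (hth : Tendsto (fun i => (t i, h i)) l (smallStep T))
    (hx : (fun i => x i - u (t i)) =O[l] h) (hy : (fun i => y i - u (t i)) =O[l] h) :
    (fun i => rk4Step F (t i) (h i) (x i) - rk4Step F (t i) (h i) (y i) - (x i - y i)
      - h i • jacobianAlong T F u (t i) (x i - y i)) =O[l] fun i => h i ^ 2 * ‖x i - y i‖ := by
  refine ((isBigO_refl h l).smul (isBigO_rk4Mean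
    (hu.isBigO_rk4Slope_sub_sub_jacobianAlong hth hx hy))).congr (fun i => ?_)
    fun i => by rw [smul_eq_mul]; ring
  simp only [rk4Step_eq_add_smul_rk4Mean, rk4Mean]
  module

end IsSolution

end RungeKutta

section RungeKuttaOrder

variable {E : Type*} [NormedAddCommGroup E] [NormedSpace ℝ E] {T : ℝ} {F : ℝ → E → E}
  {u : ℝ → E} {j n : ℕ}

/-- The error of the `j`-th stage of a Runge–Kutta step that starts on the curve `u` at time `p.1`
and has length `p.2`. -/
noncomputable def stageDefect (F : ℝ → E → E) (u : ℝ → E) (j : ℕ) (p : ℝ × ℝ) : E :=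
  rk4Stage F p.1 p.2 (u p.1) j - u (p.1 + rk4Node j * p.2)

/-- The difference between the `j`-th slope of a Runge–Kutta step that starts on the curve `u` and
the value of `F` on the curve at the corresponding node. -/
noncomputable def slopeDefect (F : ℝ → E → E) (u : ℝ → E) (j : ℕ) (p : ℝ × ℝ) : E :=
  rk4Slope F p.1 p.2 (u p.1) j - F (p.1 + rk4Node j * p.2) (u (p.1 + rk4Node j * p.2))

/-- The local error of the classical Runge–Kutta method at the curve `u`: the error after one step
of length `p.2` from the exact value at time `p.1`. -/
noncomputable def rk4LocalError (F : ℝ → E → E) (u : ℝ → E) (p : ℝ × ℝ) : E :=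
  rk4Step F p.1 p.2 (u p.1) - u (p.1 + p.2)

theorem stageDefect_succ (F : ℝ → E → E) (u : ℝ → E) (j : ℕ) (p : ℝ × ℝ) :
    stageDefect F u (j + 1) p = u p.1 + (rk4Node (j + 1) * p.2) • (slopeDefect F u j p
      + F (p.1 + rk4Node j * p.2) (u (p.1 + rk4Node j * p.2)))
      - u (p.1 + rk4Node (j + 1) * p.2) := by
  rw [stageDefect, slopeDefect, rk4Stage_succ, sub_add_cancel]

theorem slopeDefect_zero (F : ℝ → E → E) (u : ℝ → E) (p : ℝ × ℝ) : slopeDefect F u 0 p = 0 := by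
  simp [slopeDefect, rk4Slope_zero, rk4Node]

namespace IsSolution

theorem isBigO_slopeDefect (hu : IsSolution 1 T F u) (hn : n ≠ 0)
    (hj : stageDefect F u j =O[smallStep T] fun p => p.2 ^ n) :
    slopeDefect F u j =O[smallStep T] fun p => p.2 ^ n := by
  have hnode := rk4Node_mem_Icc j
  have htime : ∀ᶠ p in smallStep T, p.1 + rk4Node j * p.2 ∈ Set.Icc 0 T :=
    eventually_add_mul_mem_Icc hnode.1 hnode.2
  refine (hu.isBigO_sub_apply htime htime (by simpa using tendsto_const_nhds)
    (hj.trans_tendsto ?_) (by simpa using tendsto_const_nhds)).trans hj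
  simpa [hn] using (tendsto_snd_smallStep T).pow n

theorem isBigO_slopeDefect_sub_jacobianAlong (hu : IsSolution 2 T F u) (hn : n ≠ 0)
    (hj : stageDefect F u j =O[smallStep T] fun p => p.2 ^ n) :
    (fun p => slopeDefect F u j p - jacobianAlong T F u (p.1 + rk4Node j * p.2)
      (stageDefect F u j p)) =O[smallStep T] fun p => p.2 ^ (n + n) := by
  have hnode := rk4Node_mem_Icc j
  have htime : ∀ᶠ p in smallStep T, p.1 + rk4Node j * p.2 ∈ Set.Icc 0 T :=
    eventually_add_mul_mem_Icc hnode.1 hnode.2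
  have hr : Tendsto (fun p : ℝ × ℝ => p.2 ^ n) (smallStep T) (𝓝 0) := by
    simpa [hn] using (tendsto_snd_smallStep T).pow n
  refine (hu.isBigO_sub_sub_jacobianAlong hr htime htime (by simpa using isBigO_zero _ _) hj
    (by simpa using isBigO_zero _ _)).trans ?_
  exact ((isBigO_refl (fun p : ℝ × ℝ => p.2 ^ n) _).mul hj.norm_left).congr_right
    fun p => (pow_add _ _ _).symm

theorem isBigO_stageDefect_one (hu : IsSolution 1 T F u) :
    stageDefect F u 1 =O[smallStep T] fun p => p.2 ^ 2 := by
  refine (hu.isBigO_curve_sub_taylor (rk4Node_mem_Icc 1)).neg_left.congr_left fun p => ?_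
  simp only [stageDefect_succ, slopeDefect_zero, sum_range_succ, range_zero, sum_empty,
    velocityDeriv_zero, rk4Node, Nat.factorial, zero_mul, add_zero]
  module

theorem isBigO_stageDefect_one_add_two (hu : IsSolution 2 T F u) :
    (fun p => stageDefect F u 1 p + stageDefect F u 2 p) =O[smallStep T] fun p => p.2 ^ 3 := by
  have hu1 := hu.of_le one_le_two
  have hslope := isBigO_const_mul_smul (1 / 2)
    (hu1.isBigO_slopeDefect two_ne_zero hu1.isBigO_stageDefect_one)
  have hvelocity := isBigO_const_mul_smul (1 / 2)
    (hu.isBigO_velocity_sub_taylor (rk4Node_mem_Icc 1))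
  have hcurve := (hu.isBigO_curve_sub_taylor (rk4Node_mem_Icc 1)).const_smul_left (2 : ℝ)
  refine ((hslope.add hvelocity).sub hcurve).congr_left fun p => ?_
  simp only [stageDefect_succ, slopeDefect_zero, sum_range_succ, range_zero, sum_empty,
    velocityDeriv_zero, Pi.smul_apply, rk4Node, Nat.factorial, zero_mul, add_zero]
  module

theorem isBigO_stageDefect_two (hu : IsSolution 2 T F u) :
    stageDefect F u 2 =O[smallStep T] fun p => p.2 ^ 2 := by
  have hsum := hu.isBigO_stageDefect_one_add_two.trans
    (isBigO_pow_pow_of_tendsto_zero (tendsto_snd_smallStep T) (by norm_num : 2 ≤ 3))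
  simpa using hsum.sub (hu.of_le one_le_two).isBigO_stageDefect_one

theorem isBigO_slopeDefect_one_add_two_sub_jacobianAlong (hu : IsSolution 2 T F u) :
    (fun p => slopeDefect F u 1 p + slopeDefect F u 2 p
      - jacobianAlong T F u (p.1 + 1 / 2 * p.2) (stageDefect F u 1 p + stageDefect F u 2 p))
      =O[smallStep T] fun p => p.2 ^ 4 := by
  refine ((hu.isBigO_slopeDefect_sub_jacobianAlong two_ne_zero
    (hu.of_le one_le_two).isBigO_stageDefect_one).add
    (hu.isBigO_slopeDefect_sub_jacobianAlong two_ne_zero hu.isBigO_stageDefect_two)).congr_left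
    fun p => ?_
  simp only [rk4Node, map_add]
  abel

theorem isBigO_slopeDefect_one_add_two (hu : IsSolution 2 T F u) :
    (fun p => slopeDefect F u 1 p + slopeDefect F u 2 p) =O[smallStep T] fun p => p.2 ^ 3 := by
  have hlin := hu.isBigO_slopeDefect_one_add_two_sub_jacobianAlong.trans
    (isBigO_pow_pow_of_tendsto_zero (tendsto_snd_smallStep T) (by norm_num : 3 ≤ 4))
  have hjac := (hu.isBigO_jacobianAlong_apply (eventually_add_mul_mem_Icc
    (by norm_num : (0 : ℝ) ≤ 1 / 2) (by norm_num))).trans hu.isBigO_stageDefect_one_add_two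
  simpa using hlin.add hjac

theorem isBigO_stageDefect_three_add (hu : IsSolution 3 T F u) :
    (fun p => stageDefect F u 3 p + (2 : ℝ) • (stageDefect F u 1 p + stageDefect F u 2 p))
      =O[smallStep T] fun p => p.2 ^ 4 := by
  have hslope := isBigO_const_mul_smul 1
    (hu.of_le (by norm_num : 2 ≤ 3)).isBigO_slopeDefect_one_add_two
  have hvelocity := isBigO_const_mul_smul 2 (hu.isBigO_velocity_sub_taylor (rk4Node_mem_Icc 1))
  have hmid := (hu.isBigO_curve_sub_taylor (rk4Node_mem_Icc 1)).const_smul_left (4 : ℝ)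
  have hend := hu.isBigO_curve_sub_taylor (rk4Node_mem_Icc 3)
  refine (((hslope.add hvelocity).sub hmid).sub hend).congr_left fun p => ?_
  simp only [stageDefect_succ, slopeDefect_zero, sum_range_succ, range_zero, sum_empty,
    velocityDeriv_zero, Pi.smul_apply, rk4Node, Nat.factorial, zero_mul, add_zero]
  module

theorem isBigO_stageDefect_three (hu : IsSolution 3 T F u) :
    stageDefect F u 3 =O[smallStep T] fun p => p.2 ^ 3 := by
  have hsum := hu.isBigO_stageDefect_three_add.trans
    (isBigO_pow_pow_of_tendsto_zero (tendsto_snd_smallStep T) (by norm_num : 3 ≤ 4))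
  simpa using hsum.sub
    ((hu.of_le (by norm_num : 2 ≤ 3)).isBigO_stageDefect_one_add_two.const_smul_left (2 : ℝ))

theorem isBigO_jacobianAlong_sub_apply_fst (hu : IsSolution 2 T F u) {d : ℝ}
    (hd : d ∈ Set.Icc 0 1) {f : ℝ × ℝ → E} (hf : f =O[smallStep T] fun p => p.2 ^ n) :
    (fun p => jacobianAlong T F u (p.1 + d * p.2) (f p) - jacobianAlong T F u p.1 (f p))
      =O[smallStep T] fun p => p.2 ^ (n + 1) := by
  refine (hu.isBigO_jacobianAlong_sub_apply (eventually_add_mul_mem_Icc hd.1 hd.2)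
    (eventually_fst_mem_Icc T)).trans ?_
  refine (((isBigO_refl Prod.snd _).const_mul_left d).mul hf.norm_left).congr (fun p => ?_)
    fun p => (pow_succ' _ _).symm
  rw [add_sub_cancel_left]

theorem isBigO_rk4Mean_slopeDefect (hu : IsSolution 3 T F u) :
    (fun p => rk4Mean fun j => slopeDefect F u j p) =O[smallStep T] fun p => p.2 ^ 4 := by
  have hu2 := hu.of_le (by norm_num : 2 ≤ 3)
  have hhalf : (1 / 2 : ℝ) ∈ Set.Icc (0 : ℝ) 1 := by norm_num
  have hone : (1 : ℝ) ∈ Set.Icc (0 : ℝ) 1 := by norm_num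
  have hmid := hu2.isBigO_slopeDefect_one_add_two_sub_jacobianAlong.const_smul_left (2 : ℝ)
  have hend := (hu2.isBigO_slopeDefect_sub_jacobianAlong three_ne_zero
    hu.isBigO_stageDefect_three).trans
    (isBigO_pow_pow_of_tendsto_zero (tendsto_snd_smallStep T) (by norm_num : 4 ≤ 3 + 3))
  have hcancel := (hu2.isBigO_jacobianAlong_apply
    (eventually_add_mul_mem_Icc hone.1 hone.2)).trans hu.isBigO_stageDefect_three_add
  have hfreeze := ((hu2.isBigO_jacobianAlong_sub_apply_fst hhalf
    hu2.isBigO_stageDefect_one_add_two).sub (hu2.isBigO_jacobianAlong_sub_apply_fst hone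
    hu2.isBigO_stageDefect_one_add_two)).const_smul_left (2 : ℝ)
  refine ((((hmid.add hend).add hcancel).add hfreeze).const_smul_left (1 / 6 : ℝ)).congr_left
    fun p => ?_
  simp only [rk4Mean, slopeDefect_zero, rk4Node, Pi.smul_apply, map_add, map_smul]
  module

theorem isBigO_simpson (hu : IsSolution 4 T F u) :
    (fun p => u p.1 + p.2 • rk4Mean (fun j => F (p.1 + rk4Node j * p.2)
      (u (p.1 + rk4Node j * p.2))) - u (p.1 + p.2)) =O[smallStep T] fun p => p.2 ^ 5 := by
  have hmid := isBigO_const_mul_smul (4 / 6) (hu.isBigO_velocity_sub_taylor (rk4Node_mem_Icc 1))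
  have hend := isBigO_const_mul_smul (1 / 6) (hu.isBigO_velocity_sub_taylor (rk4Node_mem_Icc 3))
  refine ((hmid.add hend).sub (hu.isBigO_curve_sub_taylor (rk4Node_mem_Icc 3))).congr_left
    fun p => ?_
  simp only [rk4Mean, sum_range_succ, range_zero, sum_empty, velocityDeriv_zero, rk4Node,
    Nat.factorial, zero_mul, add_zero, one_mul]
  module

theorem isBigO_rk4LocalError (hu : IsSolution 4 T F u) :
    rk4LocalError F u =O[smallStep T] fun p => p.2 ^ 5 := by
  have hslope := isBigO_const_mul_smul 1
    (hu.of_le (by norm_num : 3 ≤ 4)).isBigO_rk4Mean_slopeDefect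
  refine (hu.isBigO_simpson.add hslope).congr_left fun p => ?_
  simp only [rk4LocalError, rk4Step_eq_add_smul_rk4Mean, rk4Mean, slopeDefect]
  module

end IsSolution

end RungeKuttaOrder

section RungeKuttaExpansion

variable {E : Type*} [NormedAddCommGroup E] [NormedSpace ℝ E] {T : ℝ} {F : ℝ → E → E}
  {u : ℝ → E} {j m n : ℕ}

/-- The coefficient of `h ^ (j + 1)` in the expansion of the local error of the classical
Runge–Kutta method at time `t` in powers of the step `h`: the Taylor coefficient of the mean slope
minus that of the mean velocity. -/
noncomputable def rk4ErrorCoeff (T : ℝ) (F : ℝ → E → E) (u : ℝ → E) (j : ℕ) (t : ℝ) : E :=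
  (1 / j.factorial : ℝ) • (dirDerivWithin (stepDomain T) (0, 1))^[j]
      (fun p => rk4Mean (rk4Slope F p.1 p.2 (u p.1))) (t, 0)
    - (1 / (j + 1).factorial : ℝ) • velocityDeriv T F u j t

theorem tendsto_prodMk_smallStep {t : ℝ} (ht : t ∈ Set.Ico 0 T) :
    Tendsto (fun h => (t, h)) (𝓝[>] 0) (smallStep T) := by
  refine tendsto_inf.2 ⟨tendsto_comap_iff.2 (tendsto_id.mono_left nhdsWithin_le_nhds),
    tendsto_principal.2 ?_⟩
  filter_upwards [Ioo_mem_nhdsGT (sub_pos.2 ht.2)] with h hh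
  exact ⟨ht.1, hh.1.le, by linarith [hh.2]⟩

theorem mk_zero_mem_stepDomain {t : ℝ} (ht : t ∈ Set.Icc 0 T) : (t, (0 : ℝ)) ∈ stepDomain T :=
  ⟨ht.1, le_rfl, by simpa using ht.2⟩

namespace IsSolution

theorem contDiffOn_rk4Slope (hu : IsSolution n T F u) (j : ℕ) :
    ContDiffOn ℝ n (fun p : ℝ × ℝ => rk4Slope F p.1 p.2 (u p.1) j) (stepDomain T) := by
  have hstart : ContDiffOn ℝ n (fun p : ℝ × ℝ => u p.1) (stepDomain T) :=
    (hu.contDiffOn_curve.of_le (by norm_cast; lia)).comp contDiffOn_fst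
      fun _ => fst_mem_Icc_of_mem_stepDomain
  have hslope : ∀ j, ContDiffOn ℝ n (fun p : ℝ × ℝ => rk4Stage F p.1 p.2 (u p.1) j) (stepDomain T) →
      ContDiffOn ℝ n (fun p : ℝ × ℝ => rk4Slope F p.1 p.2 (u p.1) j) (stepDomain T) :=
    fun j hstage => hu.contDiffOn.comp
      ((contDiffOn_fst.add (contDiffOn_const.mul contDiffOn_snd)).prodMk hstage)
      fun _ hp => ⟨add_mul_mem_Icc (rk4Node_mem_Icc j).1 (rk4Node_mem_Icc j).2 hp, trivial⟩
  induction j with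
  | zero => exact hslope 0 hstart
  | succ j ih =>
    exact hslope (j + 1) (hstart.add ((contDiffOn_const.mul contDiffOn_snd).smul ih))

theorem contDiffOn_rk4Mean (hu : IsSolution n T F u) :
    ContDiffOn ℝ n (fun p : ℝ × ℝ => rk4Mean (rk4Slope F p.1 p.2 (u p.1))) (stepDomain T) :=
  contDiffOn_const.smul ((((hu.contDiffOn_rk4Slope 0).add
    (contDiffOn_const.smul (hu.contDiffOn_rk4Slope 1))).add
    (contDiffOn_const.smul (hu.contDiffOn_rk4Slope 2))).add (hu.contDiffOn_rk4Slope 3))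

theorem contDiffOn_rk4ErrorCoeff (hu : IsSolution (m + j) T F u) :
    ContDiffOn ℝ m (rk4ErrorCoeff T F u j) (Set.Icc 0 T) := by
  have hmean := contDiffOn_iterate_dirDerivWithin (uniqueDiffOn_stepDomain hu.pos) (0, 1)
    hu.contDiffOn_rk4Mean
  have hvelocity := contDiffOn_iteratedDerivWithin (uniqueDiffOn_Icc hu.pos) hu.contDiffOn_velocity
  exact (contDiffOn_const.smul (hmean.comp (contDiffOn_id.prodMk contDiffOn_const)
    fun _ => mk_zero_mem_stepDomain)).sub (contDiffOn_const.smul hvelocity)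

theorem isBigO_rk4Mean_sub_taylor (hu : IsSolution n T F u) :
    (fun p : ℝ × ℝ => rk4Mean (rk4Slope F p.1 p.2 (u p.1)) - ∑ j ∈ range n,
      (p.2 ^ j / j.factorial) • (dirDerivWithin (stepDomain T) (0, 1))^[j]
        (fun p => rk4Mean (rk4Slope F p.1 p.2 (u p.1))) (p.1, 0))
      =O[smallStep T] fun p => p.2 ^ n := by
  obtain ⟨M, hM⟩ := exists_norm_sub_dirTaylor_le (uniqueDiffOn_stepDomain hu.pos)
    (convex_stepDomain T) (isCompact_stepDomain T) (0, 1) hu.contDiffOn_rk4Mean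
  refine IsBigO.of_bound M ?_
  filter_upwards [eventually_mem_stepDomain T] with p hp
  have hbound := hM (p.1, 0) (mk_zero_mem_stepDomain (fst_mem_Icc_of_mem_stepDomain hp)) p.2
    hp.2.1 (by simpa using hp)
  simpa [abs_of_nonneg hp.2.1] using hbound

theorem isBigO_rk4LocalError_sub_sum (hu : IsSolution n T F u) :
    (fun p => rk4LocalError F u p - p.2 • ∑ j ∈ range n, p.2 ^ j • rk4ErrorCoeff T F u j p.1)
      =O[smallStep T] fun p => p.2 ^ (n + 1) := by
  have hmean := isBigO_const_mul_smul 1 hu.isBigO_rk4Mean_sub_taylor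
  have hcurve := hu.isBigO_curve_sub_taylor (Set.right_mem_Icc.2 zero_le_one)
  refine (hmean.sub hcurve).congr_left fun p => ?_
  simp only [rk4LocalError, rk4Step_eq_add_smul_rk4Mean, rk4ErrorCoeff, one_mul, pow_succ',
    div_eq_mul_one_div (_ ^ _), div_eq_mul_one_div (_ * _), mul_smul, smul_sum, smul_sub,
    sum_sub_distrib]
  abel

theorem rk4ErrorCoeff_eq_zero (hu : IsSolution 4 T F u) {t : ℝ} (ht : t ∈ Set.Ico 0 T)
    (hj : j < 4) : rk4ErrorCoeff T F u j t = 0 := by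
  refine eq_zero_of_isBigO_sum_pow_smul (fun j => rk4ErrorCoeff T F u j t) ?_ j hj
  have hsum : (fun p : ℝ × ℝ => p.2 • ∑ j ∈ range 4, p.2 ^ j • rk4ErrorCoeff T F u j p.1)
      =O[smallStep T] fun p => p.2 ^ 5 := by
    simpa using hu.isBigO_rk4LocalError.sub hu.isBigO_rk4LocalError_sub_sum
  refine ((isBigO_refl (fun h : ℝ => h⁻¹) _).smul
    (hsum.comp_tendsto (tendsto_prodMk_smallStep ht))).congr' ?_ ?_ <;>
    filter_upwards [self_mem_nhdsWithin] with h (hh : 0 < h)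
  · exact inv_smul_smul₀ hh.ne' _
  · simp only [Function.comp_apply, smul_eq_mul]
    field_simp

theorem isBigO_rk4LocalError_sub_leading (hu : IsSolution 6 T F u) :
    (fun p => rk4LocalError F u p - (p.2 ^ 5 • rk4ErrorCoeff T F u 4 p.1
      + p.2 ^ 6 • rk4ErrorCoeff T F u 5 p.1)) =O[smallStep T] fun p => p.2 ^ 7 := by
  refine hu.isBigO_rk4LocalError_sub_sum.congr' ?_ EventuallyEq.rfl
  filter_upwards [eventually_mem_stepDomain T] with p hp
  obtain hzero | hpos := hp.2.1.eq_or_lt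
  · simp [← hzero]
  have hcoeff := fun j => (hu.of_le (by norm_num)).rk4ErrorCoeff_eq_zero (j := j)
    (⟨hp.1, by linarith [hp.2.2]⟩ : p.1 ∈ Set.Ico 0 T)
  simp only [sum_range_succ, range_zero, sum_empty, hcoeff 0 (by norm_num), hcoeff 1 (by norm_num),
    hcoeff 2 (by norm_num), hcoeff 3 (by norm_num)]
  module

theorem isBigO_rk4ErrorCoeff_shift (hu : IsSolution (1 + j) T F u) {d : ℝ} (hd : d ∈ Set.Icc 0 1) :
    (fun p : ℝ × ℝ => rk4ErrorCoeff T F u j (p.1 + d * p.2) - rk4ErrorCoeff T F u j p.1)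
      =O[smallStep T] fun p => p.2 ^ 1 := by
  simpa using isBigO_sub_taylor hu.pos hu.contDiffOn_rk4ErrorCoeff hd.1 hd.2

theorem exists_isBigO_rk4LocalError_shift (hu : IsSolution 6 T F u) :
    ∃ R : ℝ × ℝ → E, R =O[smallStep T] (fun p => p.2 ^ 6) ∧ ∀ d ∈ Set.Icc (0 : ℝ) (4 / 5),
      (fun p => rk4LocalError F u (p.1 + d * p.2, 1 / 5 * p.2)
        - rk4LocalError F u (p.1, 1 / 5 * p.2) - d • R p) =O[smallStep T] fun p => p.2 ^ 7 := by
  have hlead := hu.contDiffOn_rk4ErrorCoeff (m := 2) (j := 4)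
  have hslope := isBigO_one_of_continuousOn isCompact_Icc
    (contDiffOn_iteratedDerivWithin (m := 1) (j := 1) (uniqueDiffOn_Icc hu.pos) hlead).continuousOn
    (eventually_fst_mem_Icc T)
  refine ⟨fun p => p.2 ^ 6 • (1 / 5 : ℝ) ^ 5 •
    iteratedDerivWithin 1 (rk4ErrorCoeff T F u 4) (Set.Icc 0 T) p.1, ?_, fun d hd => ?_⟩
  · exact isBigO_pow_smul (n := 0) 6 (by simpa using hslope.const_smul_left _)
  have hd' : d ∈ Set.Icc (0 : ℝ) 1 := ⟨hd.1, hd.2.trans (by norm_num)⟩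
  have hexpand : ∀ d ∈ Set.Icc (0 : ℝ) (4 / 5), (fun p => rk4LocalError F u
      (p.1 + d * p.2, 1 / 5 * p.2) - ((1 / 5 * p.2) ^ 5 • rk4ErrorCoeff T F u 4 (p.1 + d * p.2)
        + (1 / 5 * p.2) ^ 6 • rk4ErrorCoeff T F u 5 (p.1 + d * p.2)))
      =O[smallStep T] fun p => p.2 ^ 7 := fun d hd =>
    (hu.isBigO_rk4LocalError_sub_leading.comp_tendsto (tendsto_shift_smallStep hd.1
      (by norm_num : (0 : ℝ) ≤ 1 / 5) (by linarith [hd.2]))).trans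
      (((isBigO_refl Prod.snd _).const_mul_left (1 / 5)).pow 7)
  have hcoeff := (isBigO_pow_smul 5 (isBigO_sub_taylor hu.pos hlead hd'.1 hd'.2)).const_smul_left
    ((1 / 5 : ℝ) ^ 5)
  have hnext := (isBigO_pow_smul 6 (hu.isBigO_rk4ErrorCoeff_shift (j := 5) hd')).const_smul_left
    ((1 / 5 : ℝ) ^ 6)
  refine ((((hexpand d hd).sub (hexpand 0 (by norm_num))).add hcoeff).add hnext).congr_left
    fun p => ?_
  simp only [sum_range_succ, range_zero, sum_empty, iteratedDerivWithin_zero, Pi.smul_apply,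
    Nat.factorial, zero_mul, add_zero]
  module

end IsSolution

end RungeKuttaExpansion

section RungeKuttaIterates

variable {E : Type*} [NormedAddCommGroup E] [NormedSpace ℝ E] {T : ℝ} {F : ℝ → E → E}
  {u : ℝ → E} {i : ℕ}

/-- The error at time `p.1 + i / 5 * p.2` of `i` steps of the classical Runge–Kutta method, each of
length `p.2 / 5`, from the exact value at time `p.1`. -/
noncomputable def rk4IterError (F : ℝ → E → E) (u : ℝ → E) (i : ℕ) (p : ℝ × ℝ) : E :=
  rk4Iter F p.1 (p.2 / 5) (u p.1) i - u (p.1 + i / 5 * p.2)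

theorem rk4IterError_zero (F : ℝ → E → E) (u : ℝ → E) (p : ℝ × ℝ) :
    rk4IterError F u 0 p = 0 := by
  simp [rk4IterError, rk4Iter]

theorem rk4Iter_div_five_succ (F : ℝ → E → E) (t k : ℝ) (x : E) (i : ℕ) :
    rk4Iter F t (k / 5) x (i + 1)
      = rk4Step F (t + i / 5 * k) (1 / 5 * k) (rk4Iter F t (k / 5) x i) := by
  rw [rk4Iter, show k / 5 = 1 / 5 * k by ring, show (i : ℝ) * (1 / 5 * k) = i / 5 * k by ring]

theorem rk4IterError_succ (F : ℝ → E → E) (u : ℝ → E) (i : ℕ) (p : ℝ × ℝ) :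
    rk4IterError F u (i + 1) p
      = rk4Step F (p.1 + i / 5 * p.2) (1 / 5 * p.2) (rk4Iter F p.1 (p.2 / 5) (u p.1) i)
        - rk4Step F (p.1 + i / 5 * p.2) (1 / 5 * p.2) (u (p.1 + i / 5 * p.2))
        + rk4LocalError F u (p.1 + i / 5 * p.2, 1 / 5 * p.2) := by
  have htime : p.1 + i / 5 * p.2 + 1 / 5 * p.2 = p.1 + (i + 1 : ℕ) / 5 * p.2 := by
    push_cast
    ring
  simp only [rk4IterError, rk4LocalError, rk4Iter_div_five_succ, htime]
  abel

theorem tendsto_substep_smallStep (hi : i < 5) :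
    Tendsto (fun p : ℝ × ℝ => (p.1 + i / 5 * p.2, 1 / 5 * p.2)) (smallStep T) (smallStep T) := by
  refine tendsto_shift_smallStep (by positivity) (by norm_num) ?_
  have : (i : ℝ) + 1 ≤ 5 := by exact_mod_cast hi
  linarith

theorem natCast_div_five_mem_Icc (hi : i ≤ 5) : (i / 5 : ℝ) ∈ Set.Icc (0 : ℝ) 1 :=
  ⟨by positivity, div_le_one_of_le₀ (by exact_mod_cast hi) (by norm_num)⟩

namespace IsSolution

theorem isBigO_rk4LocalError_substep (hu : IsSolution 4 T F u) (hi : i < 5) :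
    (fun p => rk4LocalError F u (p.1 + i / 5 * p.2, 1 / 5 * p.2))
      =O[smallStep T] fun p => p.2 ^ 5 :=
  (hu.isBigO_rk4LocalError.comp_tendsto (tendsto_substep_smallStep hi)).trans
    (((isBigO_refl Prod.snd _).const_mul_left (1 / 5)).pow 5)

theorem isBigO_rk4IterError (hu : IsSolution 4 T F u) (hi : i ≤ 5) :
    rk4IterError F u i =O[smallStep T] fun p => p.2 ^ 5 := by
  induction i with
  | zero => simpa [funext (rk4IterError_zero F u)] using isBigO_zero _ _
  | succ i ih =>
    have ih := ih (by lia)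
    have hstep := tendsto_substep_smallStep (T := T) hi
    have hzero : Tendsto (fun p : ℝ × ℝ => p.2 ^ 5) (smallStep T) (𝓝 0) := by
      simpa using (tendsto_snd_smallStep T).pow 5
    have hstable := isBigO_of_sub_isBigO_mul_norm ((tendsto_snd_smallStep T).comp hstep)
      ((hu.of_le (by norm_num)).isBigO_rk4Step_sub_sub hstep
        (x := fun p : ℝ × ℝ => rk4Iter F p.1 (p.2 / 5) (u p.1) i)
        (y := fun p => u (p.1 + i / 5 * p.2)) (ih.trans_tendsto hzero)
        (by simpa using tendsto_const_nhds))
    exact ((hstable.trans ih).add (hu.isBigO_rk4LocalError_substep hi)).congr_left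
      fun p => (rk4IterError_succ F u i p).symm

theorem isBigO_rk4IterError_succ_sub (hu : IsSolution 4 T F u) (hi : i < 5) :
    (fun p => rk4IterError F u (i + 1) p - rk4IterError F u i p
      - (1 / 5 * p.2) • jacobianAlong T F u p.1 (rk4IterError F u i p)
      - rk4LocalError F u (p.1 + i / 5 * p.2, 1 / 5 * p.2)) =O[smallStep T] fun p => p.2 ^ 7 := by
  have hu2 := hu.of_le (by norm_num : 2 ≤ 4)
  have herr := hu.isBigO_rk4IterError hi.le
  have hlength : (fun p : ℝ × ℝ => p.2) =O[smallStep T] fun p => 1 / 5 * p.2 :=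
    isBigO_self_const_mul (by norm_num) _ _
  have hfirst : (fun p : ℝ × ℝ => p.2 ^ 5) =O[smallStep T] fun p => p.2 := by
    simpa using isBigO_pow_pow_of_tendsto_zero (tendsto_snd_smallStep T) (by norm_num : 1 ≤ 5)
  have hlin := hu2.isBigO_rk4Step_sub_sub_jacobianAlong (tendsto_substep_smallStep hi)
    (x := fun p : ℝ × ℝ => rk4Iter F p.1 (p.2 / 5) (u p.1) i)
    (y := fun p => u (p.1 + i / 5 * p.2))
    ((herr.trans hfirst).trans hlength)
    (by simpa using isBigO_zero _ _)
  have hlin' := hlin.trans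
    ((((isBigO_refl Prod.snd _).const_mul_left (1 / 5)).pow 2).mul herr.norm_left)
  have hfreeze := isBigO_const_mul_smul (1 / 5)
    (hu2.isBigO_jacobianAlong_sub_apply_fst (natCast_div_five_mem_Icc hi.le) herr)
  refine ((hlin'.congr_right fun p => (pow_add _ _ _).symm).add hfreeze).congr_left fun p => ?_
  rw [rk4IterError_succ]
  simp only [rk4IterError]
  module

theorem exists_isBigO_rk4IterError_sub (hu : IsSolution 6 T F u) :
    ∃ P Q : ℝ × ℝ → E, Q =O[smallStep T] (fun p => p.2 ^ 6) ∧ ∀ i ≤ 5,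
      (fun p => rk4IterError F u i p - ((i : ℝ) • P p + (i * (i - 1) / 2 : ℝ) • Q p))
        =O[smallStep T] fun p => p.2 ^ 7 := by
  have hu4 := hu.of_le (by norm_num : 4 ≤ 6)
  have hu2 := hu.of_le (by norm_num : 2 ≤ 6)
  have hJ := fun f : ℝ × ℝ → E => hu2.isBigO_jacobianAlong_apply (f := f) (eventually_fst_mem_Icc T)
  obtain ⟨R, hR, hshift⟩ := hu.exists_isBigO_rk4LocalError_shift
  let P : ℝ × ℝ → E := fun p => rk4LocalError F u (p.1, 1 / 5 * p.2)
  let Q : ℝ × ℝ → E := fun p => (1 / 5 : ℝ) • R p + (1 / 5 * p.2) • jacobianAlong T F u p.1 (P p)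
  have hP : P =O[smallStep T] fun p => p.2 ^ 5 := by
    simpa [P] using hu4.isBigO_rk4LocalError_substep (i := 0) (by norm_num)
  have hQ : Q =O[smallStep T] fun p => p.2 ^ 6 :=
    (hR.const_smul_left _).add (isBigO_const_mul_smul _ ((hJ P).trans hP))
  refine ⟨P, Q, hQ, fun i hi => ?_⟩
  induction i with
  | zero => simpa [rk4IterError_zero] using isBigO_zero _ _
  | succ i ih =>
    have ih := ih (by lia)
    have hlinear : (fun p => rk4IterError F u i p - (i : ℝ) • P p)
        =O[smallStep T] fun p => p.2 ^ 6 := by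
      have hquad := hQ.const_smul_left (i * (i - 1) / 2 : ℝ)
      simpa [sub_add_eq_sub_sub] using (ih.trans (isBigO_pow_pow_of_tendsto_zero
        (tendsto_snd_smallStep T) (by norm_num : 6 ≤ 7))).add hquad
    have hjac := isBigO_const_mul_smul (1 / 5) ((hJ _).trans hlinear)
    have hd : (i / 5 : ℝ) ∈ Set.Icc (0 : ℝ) (4 / 5) :=
      ⟨by positivity, by gcongr; exact_mod_cast Nat.le_of_lt_succ hi⟩
    refine (((hu4.isBigO_rk4IterError_succ_sub hi).add ih).add hjac |>.add
      (hshift _ hd)).congr_left fun p => ?_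
    simp only [Q, map_sub, map_smul]
    push_cast
    module

end IsSolution

end RungeKuttaIterates

section DeferredCorrection

variable {ι E : Type*} [NormedAddCommGroup E] [NormedSpace ℝ E] {T : ℝ} {F : ℝ → E → E}
  {u : ℝ → E}

theorem isBigO_dcA {G : Type*} [NormedAddCommGroup G] {l : Filter ι} {w : ι → ℕ → E} {g : ι → G}
    (hw : ∀ j ≤ 5, (fun i => w i j) =O[l] g) : (fun i => dcA (w i)) =O[l] g :=
  (((((((hw 0 (by norm_num)).const_smul_left (-3 : ℝ)).sub (hw 1 (by norm_num))).add
    ((hw 2 (by norm_num)).const_smul_left (18 : ℝ))).sub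
    ((hw 3 (by norm_num)).const_smul_left (18 : ℝ))).add (hw 4 (by norm_num))).add
    ((hw 5 le_rfl).const_smul_left (3 : ℝ))).const_smul_left (125 / 384 : ℝ)

theorem isBigO_dcB {G : Type*} [NormedAddCommGroup G] {l : Filter ι} {w : ι → ℕ → E} {g : ι → G}
    (hw : ∀ j ≤ 5, (fun i => w i j) =O[l] g) : (fun i => dcB (w i)) =O[l] g :=
  (((((((hw 0 (by norm_num)).const_smul_left (145 : ℝ)).sub
    ((hw 1 (by norm_num)).const_smul_left (387 : ℝ))).add
    ((hw 2 (by norm_num)).const_smul_left (402 : ℝ))).sub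
    ((hw 3 (by norm_num)).const_smul_left (238 : ℝ))).add
    ((hw 4 (by norm_num)).const_smul_left (93 : ℝ))).sub
    ((hw 5 le_rfl).const_smul_left (15 : ℝ))).const_smul_left (25 / 768 : ℝ)

theorem dcA_sub (w w' : ℕ → E) : dcA (fun i => w i - w' i) = dcA w - dcA w' := by
  simp only [dcA]
  module

theorem dcB_sub (w w' : ℕ → E) : dcB (fun i => w i - w' i) = dcB w - dcB w' := by
  simp only [dcB]
  module

theorem dcA_const (c : E) : dcA (fun _ => c) = 0 := by
  simp only [dcA]
  module

theorem dcA_sub_quadratic (w : ℕ → E) (P Q : E) :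
    dcA (fun i => w i - ((i : ℝ) • P + (i * (i - 1) / 2 : ℝ) • Q)) = dcA w := by
  simp only [dcA]
  push_cast
  module

theorem dcB_sub_linear (w : ℕ → E) (P : E) : dcB (fun i => w i - (i : ℝ) • P) = dcB w := by
  simp only [dcB]
  push_cast
  module

/-- The argument at which a step of the deferred-correction scheme evaluates `F` at the midpoint
time. -/
noncomputable def dcMidpoint (F : ℝ → E → E) (t k : ℝ) (x : E) : E :=
  x + (k / 2) • F t x + dcB (rk4Iter F t (k / 5) x)

theorem dcStep_eq_dcMidpoint (F : ℝ → E → E) (t k : ℝ) (x : E) :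
    dcStep F t k x = x + dcA (rk4Iter F t (k / 5) x)
      + k • F (t + 1 / 2 * k) (dcMidpoint F t k x) := by
  rw [dcStep, dcMidpoint, one_div_mul_eq_div]

namespace IsSolution

theorem isBigO_dcA_rk4IterError (hu : IsSolution 6 T F u) :
    (fun p => dcA fun i => rk4IterError F u i p) =O[smallStep T] fun p => p.2 ^ 7 := by
  obtain ⟨P, Q, -, hPQ⟩ := hu.exists_isBigO_rk4IterError_sub
  exact (isBigO_dcA hPQ).congr_left fun p => dcA_sub_quadratic _ _ _

theorem isBigO_dcB_rk4IterError (hu : IsSolution 6 T F u) :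
    (fun p => dcB fun i => rk4IterError F u i p) =O[smallStep T] fun p => p.2 ^ 6 := by
  obtain ⟨P, Q, hQ, hPQ⟩ := hu.exists_isBigO_rk4IterError_sub
  have hlinear : ∀ i ≤ 5, (fun p => rk4IterError F u i p - (i : ℝ) • P p)
      =O[smallStep T] fun p => p.2 ^ 6 := fun i hi => by
    simpa [sub_add_eq_sub_sub] using ((hPQ i hi).trans (isBigO_pow_pow_of_tendsto_zero
      (tendsto_snd_smallStep T) (by norm_num : 6 ≤ 7))).add
      (hQ.const_smul_left (i * (i - 1) / 2 : ℝ))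
  exact (isBigO_dcB hlinear).congr_left fun p => dcB_sub_linear _ _

theorem isBigO_curve_midpoint (hu : IsSolution 5 T F u) :
    (fun p : ℝ × ℝ => u p.1 + (p.2 / 2) • F p.1 (u p.1) + dcB (fun i => u (p.1 + i / 5 * p.2))
      - u (p.1 + 1 / 2 * p.2)) =O[smallStep T] fun p => p.2 ^ 6 := by
  have hcorrection := isBigO_dcB (l := smallStep T) fun i hi =>
    hu.isBigO_curve_sub_taylor (natCast_div_five_mem_Icc hi)
  have hmid := hu.isBigO_curve_sub_taylor (d := 1 / 2) (by norm_num)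
  refine (hcorrection.sub hmid).congr_left fun p => ?_
  simp only [dcB, sum_range_succ, range_zero, sum_empty, velocityDeriv_zero, Nat.factorial]
  push_cast
  module

theorem isBigO_curve_endpoint (hu : IsSolution 6 T F u) :
    (fun p : ℝ × ℝ => u p.1 + dcA (fun i => u (p.1 + i / 5 * p.2))
      + p.2 • F (p.1 + 1 / 2 * p.2) (u (p.1 + 1 / 2 * p.2)) - u (p.1 + p.2))
      =O[smallStep T] fun p => p.2 ^ 7 := by
  have hcorrection := isBigO_dcA (l := smallStep T) fun i hi =>
    hu.isBigO_curve_sub_taylor (natCast_div_five_mem_Icc hi)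
  have hvelocity := isBigO_const_mul_smul 1 (hu.isBigO_velocity_sub_taylor (d := 1 / 2)
    (by norm_num))
  have hend := hu.isBigO_curve_sub_taylor (d := 1) (by norm_num)
  refine ((hcorrection.add hvelocity).sub hend).congr_left fun p => ?_
  simp only [dcA, sum_range_succ, range_zero, sum_empty, velocityDeriv_zero, Nat.factorial, one_mul]
  push_cast
  module

theorem isBigO_dcMidpoint_sub (hu : IsSolution 6 T F u) :
    (fun p : ℝ × ℝ => dcMidpoint F p.1 p.2 (u p.1) - u (p.1 + 1 / 2 * p.2))
      =O[smallStep T] fun p => p.2 ^ 6 := by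
  refine ((hu.of_le (by norm_num)).isBigO_curve_midpoint.add
    hu.isBigO_dcB_rk4IterError).congr_left fun p => ?_
  simp only [dcMidpoint, rk4IterError, dcB_sub]
  abel

theorem isBigO_dcStep_sub (hu : IsSolution 6 T F u) :
    (fun p : ℝ × ℝ => dcStep F p.1 p.2 (u p.1) - u (p.1 + p.2))
      =O[smallStep T] fun p => p.2 ^ 7 := by
  have hmid := hu.isBigO_dcMidpoint_sub
  have htime : ∀ᶠ p in smallStep T, p.1 + 1 / 2 * p.2 ∈ Set.Icc 0 T :=
    eventually_add_mul_mem_Icc (by norm_num) (by norm_num)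
  have hzero : Tendsto (fun p : ℝ × ℝ => p.2 ^ 6) (smallStep T) (𝓝 0) := by
    simpa using (tendsto_snd_smallStep T).pow 6
  have hvelocity := isBigO_const_mul_smul 1 (((hu.of_le (by norm_num)).isBigO_sub_apply htime htime
    (by simpa using tendsto_const_nhds) (hmid.trans_tendsto hzero)
    (z' := fun p => u (p.1 + 1 / 2 * p.2)) (by simpa using tendsto_const_nhds)).trans hmid)
  refine ((hu.isBigO_curve_endpoint.add hu.isBigO_dcA_rk4IterError).add hvelocity).congr_left
    fun p => ?_
  simp only [dcStep_eq_dcMidpoint, rk4IterError, dcA_sub]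
  module

end IsSolution

end DeferredCorrection

section Stability

variable {ι E : Type*} [NormedAddCommGroup E] [NormedSpace ℝ E] {T : ℝ} {F : ℝ → E → E}
  {u : ℝ → E} {l : Filter ι} {t h : ι → ℝ} {x y : ι → E} {j : ℕ}

namespace IsSolution

theorem tendsto_curve_shift (hu : IsSolution 0 T F u) {d : ℝ} (hd : d ∈ Set.Icc 0 1) :
    Tendsto (fun p : ℝ × ℝ => u (p.1 + d * p.2) - u p.1) (smallStep T) (𝓝 0) := by
  have hfirst := hu.isBigO_curve_sub_taylor hd
  simp only [range_zero, sum_empty, sub_zero, zero_add, pow_one] at hfirst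
  exact hfirst.trans_tendsto (tendsto_snd_smallStep T)

theorem tendsto_rk4Step_sub_curve (hu : IsSolution 1 T F u)
    (hth : Tendsto (fun i => (t i, h i)) l (smallStep T))
    (hx : Tendsto (fun i => x i - u (t i)) l (𝓝 0)) :
    Tendsto (fun i => rk4Step F (t i) (h i) (x i) - u (t i + h i)) l (𝓝 0) := by
  have hslope := tendsto_const_mul_smul_zero ((tendsto_snd_smallStep T).comp hth) 1
    (isBigO_rk4Mean (hu.isBigO_one_rk4Slope hth hx))
  have hcurve := ((hu.of_le zero_le_one).tendsto_curve_shift (d := 1) (by norm_num)).comp hth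
  have hsum := (hx.add hslope).sub hcurve
  simp only [add_zero, sub_zero] at hsum
  refine hsum.congr fun i => ?_
  simp only [rk4Step_eq_add_smul_rk4Mean, Function.comp_apply, one_mul]
  abel

theorem tendsto_rk4Iter_sub_curve (hu : IsSolution 1 T F u)
    (hth : Tendsto (fun i => (t i, h i)) l (smallStep T))
    (hx : Tendsto (fun i => x i - u (t i)) l (𝓝 0)) (hj : j ≤ 5) :
    Tendsto (fun i => rk4Iter F (t i) (h i / 5) (x i) j - u (t i + j / 5 * h i)) l (𝓝 0) := by
  induction j with
  | zero => simpa [rk4Iter] using hx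
  | succ j ih =>
    refine (hu.tendsto_rk4Step_sub_curve ((tendsto_substep_smallStep hj).comp hth)
      (ih (by lia))).congr fun i => ?_
    rw [rk4Iter_div_five_succ]
    congr 2
    push_cast
    ring

theorem isBigO_rk4Iter_sub_sub (hu : IsSolution 1 T F u)
    (hth : Tendsto (fun i => (t i, h i)) l (smallStep T))
    (hx : Tendsto (fun i => x i - u (t i)) l (𝓝 0)) (hy : Tendsto (fun i => y i - u (t i)) l (𝓝 0))
    (hj : j ≤ 5) :
    (fun i => rk4Iter F (t i) (h i / 5) (x i) j - rk4Iter F (t i) (h i / 5) (y i) j - (x i - y i))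
      =O[l] fun i => h i * ‖x i - y i‖ := by
  induction j with
  | zero => simpa [rk4Iter] using isBigO_zero _ _
  | succ j ih =>
    have ih := ih (by lia)
    have hdiff := isBigO_of_sub_isBigO_mul_norm ((tendsto_snd_smallStep T).comp hth) ih
    have hstep := (hu.isBigO_rk4Step_sub_sub ((tendsto_substep_smallStep hj).comp hth)
      (hu.tendsto_rk4Iter_sub_curve hth hx (by lia))
      (hu.tendsto_rk4Iter_sub_curve hth hy (by lia))).trans
      (((isBigO_refl h l).const_mul_left (1 / 5)).mul hdiff.norm_norm)
    refine (hstep.add ih).congr_left fun i => ?_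
    simp only [rk4Iter_div_five_succ]
    abel

theorem isBigO_rk4Iter_sub (hu : IsSolution 1 T F u)
    (hth : Tendsto (fun i => (t i, h i)) l (smallStep T))
    (hx : Tendsto (fun i => x i - u (t i)) l (𝓝 0)) (hy : Tendsto (fun i => y i - u (t i)) l (𝓝 0))
    (hj : j ≤ 5) :
    (fun i => rk4Iter F (t i) (h i / 5) (x i) j - rk4Iter F (t i) (h i / 5) (y i) j)
      =O[l] fun i => x i - y i :=
  isBigO_of_sub_isBigO_mul_norm ((tendsto_snd_smallStep T).comp hth)
    (hu.isBigO_rk4Iter_sub_sub hth hx hy hj)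

theorem isBigO_dcMidpoint_sub_dcMidpoint (hu : IsSolution 1 T F u)
    (hth : Tendsto (fun i => (t i, h i)) l (smallStep T))
    (hx : Tendsto (fun i => x i - u (t i)) l (𝓝 0))
    (hy : Tendsto (fun i => y i - u (t i)) l (𝓝 0)) :
    (fun i => dcMidpoint F (t i) (h i) (x i) - dcMidpoint F (t i) (h i) (y i))
      =O[l] fun i => x i - y i := by
  have ht := hth.eventually (eventually_fst_mem_Icc T)
  have hslope := (isBigO_const_mul_smul_self ((tendsto_snd_smallStep T).comp hth) (1 / 2) _).trans
    (hu.isBigO_sub_apply ht ht (by simpa using tendsto_const_nhds) hx hy)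
  have hcorrection := isBigO_dcB fun j hj => hu.isBigO_rk4Iter_sub hth hx hy hj
  refine (((isBigO_refl (fun i => x i - y i) l).add hslope).add hcorrection).congr_left fun i => ?_
  simp only [dcMidpoint, dcB_sub, Function.comp_apply]
  module

theorem isBigO_dcStep_sub_sub (hu : IsSolution 6 T F u)
    (hth : Tendsto (fun i => (t i, h i)) l (smallStep T))
    (hx : Tendsto (fun i => x i - u (t i)) l (𝓝 0)) :
    (fun i => dcStep F (t i) (h i) (x i) - dcStep F (t i) (h i) (u (t i)) - (x i - u (t i)))
      =O[l] fun i => h i * ‖x i - u (t i)‖ := by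
  have hu1 := hu.of_le (by norm_num : 1 ≤ 6)
  have hcurve : Tendsto (fun i => u (t i) - u (t i)) l (𝓝 0) := by simpa using tendsto_const_nhds
  have hmid := hu1.isBigO_dcMidpoint_sub_dcMidpoint hth hx hcurve
  have hmid_curve := (hu.isBigO_dcMidpoint_sub.trans_tendsto
    (by simpa using (tendsto_snd_smallStep T).pow 6)).comp hth
  have hmid_near := (hmid.trans_tendsto hx).add hmid_curve
  simp only [Function.comp_apply, sub_add_sub_cancel, add_zero] at hmid_near
  have htime := hth.eventually (eventually_add_mul_mem_Icc (d := 1 / 2) (by norm_num) (by norm_num))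
  have hvelocity := (isBigO_refl h l).smul ((hu1.isBigO_sub_apply htime htime
    (by simpa using tendsto_const_nhds) hmid_near hmid_curve).trans hmid).norm_right
  have hcorrection := isBigO_dcA fun j hj => hu1.isBigO_rk4Iter_sub_sub hth hx hcurve hj
  refine (hcorrection.add hvelocity).congr_left fun i => ?_
  simp only [dcStep_eq_dcMidpoint, dcA_sub, dcA_const]
  module

end IsSolution

end Stability

section GlobalError

theorem le_mul_exp_of_forall_le_imp {e : ℕ → ℝ} {c k δ T ε : ℝ} {N : ℕ} (hc : 0 ≤ c) (hk : 0 ≤ k)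
    (hδ : 0 ≤ δ) (hN : N * k ≤ T) (hε : T * δ * Real.exp (c * T) ≤ ε) (hzero : e 0 ≤ 0)
    (hstep : ∀ n < N, e n ≤ ε → e (n + 1) ≤ (1 + c * k) * e n + k * δ) :
    ∀ n ≤ N, e n ≤ T * δ * Real.exp (c * T) := by
  have hT : 0 ≤ T := hN.trans' (by positivity)
  have hprofile : ∀ n ≤ N, n * k * δ * Real.exp (c * (n * k)) ≤ T * δ * Real.exp (c * T) := by
    intro n hn
    have htime : n * k ≤ T := hN.trans' (by gcongr)
    gcongr
  suffices hgrowth : ∀ n ≤ N, e n ≤ n * k * δ * Real.exp (c * (n * k)) from fun n hn =>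
    (hgrowth n hn).trans (hprofile n hn)
  intro n hn
  induction n with
  | zero => simpa using hzero
  | succ n ih =>
    have ih := ih (by lia)
    have hsmall : e n ≤ ε := (ih.trans (hprofile n (by lia))).trans hε
    have hexp : (1 + c * k) * Real.exp (c * (n * k)) ≤ Real.exp (c * ((n + 1 : ℕ) * k)) := by
      rw [Nat.cast_succ, add_one_mul, mul_add, mul_comm, Real.exp_add, add_comm 1]
      gcongr
      exact Real.add_one_le_exp _
    calc e (n + 1) ≤ (1 + c * k) * e n + k * δ := hstep n hn hsmall
      _ ≤ (1 + c * k) * (n * k * δ * Real.exp (c * (n * k))) + k * δ := by gcongr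
      _ = n * k * δ * ((1 + c * k) * Real.exp (c * (n * k))) + k * δ * 1 := by ring
      _ ≤ n * k * δ * Real.exp (c * ((n + 1 : ℕ) * k))
          + k * δ * Real.exp (c * ((n + 1 : ℕ) * k)) := by
          gcongr
          exact Real.one_le_exp (by positivity)
      _ = (n + 1 : ℕ) * k * δ * Real.exp (c * ((n + 1 : ℕ) * k)) := by
          push_cast
          ring

theorem natCast_mul_div_mk_mem_stepDomain {T : ℝ} (hT : 0 ≤ T) {n N : ℕ} (hn : n < N) :
    (n * (T / N), T / N) ∈ stepDomain T := by
  have hN : (0 : ℝ) < N := by exact_mod_cast n.zero_le.trans_lt hn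
  have hnN : (n : ℝ) + 1 ≤ N := by exact_mod_cast hn
  refine ⟨by positivity, by positivity, ?_⟩
  calc n * (T / N) + T / N = (n + 1) * (T / N) := by ring
    _ ≤ N * (T / N) := by gcongr
    _ = T := mul_div_cancel₀ T hN.ne'

variable {E : Type*} [NormedAddCommGroup E] [NormedSpace ℝ E] {T : ℝ} {F : ℝ → E → E}
  {u : ℝ → E}

/-- The error of the deferred-correction sequence with step `k`, started on the curve `u`, after
`n` steps. -/
noncomputable def dcSeqError (F : ℝ → E → E) (u : ℝ → E) (k : ℝ) (n : ℕ) : E :=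
  dcSeq F (u 0) k n - u (n * k)

/-- Near the curve `u`, one step of the deferred-correction scheme amplifies the error by a factor
`1 + C k` and adds at most `C k ^ 7` to it, for steps `k ≤ k0` and errors of norm at most `ε`. -/
def HasStepBound (T : ℝ) (F : ℝ → E → E) (u : ℝ → E) (C k0 ε : ℝ) : Prop :=
  ∀ p ∈ stepDomain T, p.2 ≤ k0 → ∀ x, ‖x - u p.1‖ ≤ ε →
    ‖dcStep F p.1 p.2 x - u (p.1 + p.2)‖ ≤ (1 + C * p.2) * ‖x - u p.1‖ + C * p.2 ^ 7

theorem IsSolution.exists_hasStepBound (hu : IsSolution 6 T F u) :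
    ∃ C > 0, ∃ k0 > 0, ∃ ε > 0, HasStepBound T F u C k0 ε := by
  let deviation : (ℝ × ℝ) × E → E := fun q => q.2 - u q.1.1
  let l := comap Prod.fst (smallStep T) ⊓ comap deviation (𝓝 0)
  have hstep : Tendsto Prod.fst l (smallStep T) := tendsto_comap.mono_left inf_le_left
  have hdeviation : Tendsto deviation l (𝓝 0) := tendsto_comap.mono_left inf_le_right
  obtain ⟨C, hC, hbound⟩ := ((hu.isBigO_dcStep_sub_sub hstep hdeviation).norm_norm.add_add
    (hu.isBigO_dcStep_sub.comp_tendsto hstep).norm_norm).exists_pos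
  obtain ⟨⟨k0, ε⟩, ⟨hk0, hε⟩, hball⟩ := (((hasBasis_smallStep T).comap Prod.fst).inf
    (Metric.nhds_basis_closedBall.comap deviation)).eventually_iff.1 hbound.bound
  refine ⟨C, hC, k0, hk0, ε, hε, fun p hp hpk x hx => ?_⟩
  have hdefect : ‖dcStep F p.1 p.2 x - dcStep F p.1 p.2 (u p.1) - (x - u p.1)‖
      + ‖dcStep F p.1 p.2 (u p.1) - u (p.1 + p.2)‖ ≤ C * (p.2 * ‖x - u p.1‖ + p.2 ^ 7) := by
    have hrhs : 0 ≤ p.2 * ‖x - u p.1‖ + p.2 ^ 7 := by have := hp.2.1; positivity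
    refine (le_abs_self _).trans ((hball (x := (p, x))
      ⟨⟨hpk, hp⟩, by simpa [deviation] using hx⟩).trans_eq ?_)
    simp [abs_of_nonneg hp.2.1, abs_of_nonneg hrhs]
  calc ‖dcStep F p.1 p.2 x - u (p.1 + p.2)‖
      = ‖(x - u p.1) + ((dcStep F p.1 p.2 x - dcStep F p.1 p.2 (u p.1) - (x - u p.1))
          + (dcStep F p.1 p.2 (u p.1) - u (p.1 + p.2)))‖ := by congr 1; abel
    _ ≤ ‖x - u p.1‖ + C * (p.2 * ‖x - u p.1‖ + p.2 ^ 7) :=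
        norm_add_le_of_le le_rfl ((norm_add_le _ _).trans hdefect)
    _ = (1 + C * p.2) * ‖x - u p.1‖ + C * p.2 ^ 7 := by ring

namespace HasStepBound

variable {C k0 ε : ℝ} {n N : ℕ}

theorem norm_dcSeqError_succ_le (hstep : HasStepBound T F u C k0 ε) (hT : 0 ≤ T)
    (hk : T / N ≤ k0) (hn : n < N) (hsmall : ‖dcSeqError F u (T / N) n‖ ≤ ε) :
    ‖dcSeqError F u (T / N) (n + 1)‖
      ≤ (1 + C * (T / N)) * ‖dcSeqError F u (T / N) n‖ + C * (T / N) ^ 7 := by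
  have hbound := hstep _ (natCast_mul_div_mk_mem_stepDomain hT hn) hk _ hsmall
  rwa [← add_one_mul, ← Nat.cast_succ] at hbound

theorem norm_dcSeqError_le (hstep : HasStepBound T F u C k0 ε) (hT : 0 ≤ T) (hC : 0 ≤ C)
    (hN : N ≠ 0) (hk : T / N ≤ k0) (hε : T * (C * (T / N) ^ 6) * Real.exp (C * T) ≤ ε)
    (hn : n ≤ N) :
    ‖dcSeqError F u (T / N) n‖ ≤ T * (C * (T / N) ^ 6) * Real.exp (C * T) := by
  refine le_mul_exp_of_forall_le_imp (e := fun n => ‖dcSeqError F u (T / N) n‖) (k := T / N) hC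
    (by positivity) (by positivity) (mul_div_cancel₀ T (Nat.cast_ne_zero.2 hN)).le hε
    (by simp [dcSeqError, dcSeq]) (fun m hm hsmall => ?_) n hn
  exact (hstep.norm_dcSeqError_succ_le hT hk hm hsmall).trans_eq (by ring)

end HasStepBound

end GlobalError

theorem dc6rk24_error_recursion_general {E : Type*} [NormedAddCommGroup E] [NormedSpace ℝ E]
    {T : ℝ} {F : ℝ → E → E} {u : ℝ → E} (hu : IsSolution 6 T F u) :
    ∃ C > 0, ∃ k0 > 0, ∀ N : ℕ, T / N ≤ k0 → ∀ n < N,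
      ‖dcSeq F (u 0) (T / N) (n + 1) - u (((n : ℝ) + 1) * (T / N))‖
        ≤ ‖dcSeq F (u 0) (T / N) n - u ((n : ℝ) * (T / N))‖ + C * (T / N) ^ 7 := by
  obtain ⟨C, hC, k0, hk0, ε, hε, hstep⟩ := hu.exists_hasStepBound
  have hT := hu.pos
  let M := T * C * Real.exp (C * T)
  have hM : 0 < M := by positivity
  refine ⟨C * M + C, by positivity, min k0 (min 1 (ε / M)), by positivity, fun N hk n hn => ?_⟩
  obtain ⟨hk0, hk1, hkε⟩ := by simpa only [le_min_iff] using hk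
  set k := T / N
  have hk : 0 ≤ k := by positivity
  have hbudget : T * (C * k ^ 6) * Real.exp (C * T) ≤ ε :=
    calc T * (C * k ^ 6) * Real.exp (C * T) = M * k ^ 6 := by ring
      _ ≤ M * (ε / M) := by gcongr; exact (pow_le_of_le_one hk hk1 (by norm_num)).trans hkε
      _ = ε := mul_div_cancel₀ ε hM.ne'
  have hglobal := hstep.norm_dcSeqError_le hT.le hC.le (Nat.ne_zero_of_lt hn) hk0 hbudget hn.le
  calc ‖dcSeq F (u 0) k (n + 1) - u ((n + 1) * k)‖ = ‖dcSeqError F u k (n + 1)‖ := by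
        rw [dcSeqError, Nat.cast_succ]
    _ ≤ (1 + C * k) * ‖dcSeqError F u k n‖ + C * k ^ 7 :=
        hstep.norm_dcSeqError_succ_le hT.le hk0 hn (hglobal.trans hbudget)
    _ = ‖dcSeqError F u k n‖ + C * k * ‖dcSeqError F u k n‖ + C * k ^ 7 := by ring
    _ ≤ ‖dcSeqError F u k n‖ + C * k * (T * (C * k ^ 6) * Real.exp (C * T)) + C * k ^ 7 := by
        gcongr
    _ = ‖dcSeqError F u k n‖ + (C * M + C) * k ^ 7 := by ring

/-- **one-step error recursion (b24) for DC6RK2/4.**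
Under the hypotheses of Theorem 4.1, there are constants `C > 0` and `k₀ > 0` such that
for every positive integer `N` with `k = T/N ≤ k₀`, the DC6RK2/4 sequence satisfies
`‖u^{6,n+1} − u(t_{n+1})‖ ≤ (1 + μk + (1/2)μ²k²)‖u^{6,n} − u(t_n)‖ + C k⁷`
for every `n = 0, …, N − 1`. -/
theorem dc6rk24_error_recursion
    (T : ℝ) (hT : 0 < T) (F : ℝ → X → X) (μ : ℝ) (hμ : 0 ≤ μ)
    (hF : ContDiffOn ℝ 6 (Function.uncurry F) (Set.Icc 0 T ×ˢ (Set.univ : Set X)))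
    (hLip : ∀ t ∈ Set.Icc 0 T, ∀ x y : X, ‖F t x - F t y‖ ≤ μ * ‖x - y‖)
    (u : ℝ → X) (u0 : X)
    (hu : ContDiffOn ℝ 7 u (Set.Icc 0 T))
    (hu0 : u 0 = u0)
    (hode : ∀ t ∈ Set.Icc 0 T, HasDerivAt u (F t (u t)) t) :
    ∃ C > 0, ∃ k0 > 0, ∀ N : ℕ, 0 < N → T / N ≤ k0 →
      ∀ n : ℕ, n < N →
        ‖dcSeq F u0 (T / N) (n + 1) - u (((n : ℝ) + 1) * (T / N))‖
          ≤ (1 + μ * (T / N) + (1 / 2) * μ ^ 2 * (T / N) ^ 2)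
              * ‖dcSeq F u0 (T / N) n - u ((n : ℝ) * (T / N))‖
            + C * (T / N) ^ 7 := by
  subst hu0
  obtain ⟨C, hC, k0, hk0, hbound⟩ := dc6rk24_error_recursion_general
    ⟨hT, hF, fun t ht => (hode t ht).hasDerivWithinAt⟩
  refine ⟨C, hC, k0, hk0, fun N _ hk n hn => (hbound N hk n hn).trans ?_⟩
  gcongr
  refine le_mul_of_one_le_left (norm_nonneg _) ?_
  rw [add_assoc]
  exact le_add_of_nonneg_right (by positivity)
end

section
/- Let X be a Banach space, T > 0, m a positive integer, and F : X → X of class C^{m+1} with all Fréchet derivatives of order 1, …, m+1 bounded on X. Let u ∈ C^{m+1}([0,T], X), let 0 < k ≤ 1, t_n = nk with Nk ≤ T, and let {v^n}_{n=0}^{N} be elements of X such that ‖D₊^j(v^n − u(t_n))‖ ≤ C₀ k^4 for all j = 0, 1, …, m and all n with n + j ≤ N, where D₊^j e^n = k^{−j} Σ_{i=0}^{j} (−1)^i binom(j,i) e^{n+j−i}. Then there exists a constant C, depending only on m, T, C₀, the bounds on the derivatives of F, and the derivatives of u up to order m+1, such that ‖D₊^m(F(v^n) − F(u(t_n)))‖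 ≤ C k^4 for all n with n + m ≤ N. -/
open Finset

/-!
Join the exact and the perturbed sequence by segments. By the mean value theorem, `D₊^m` of
`F(w') - F(w)` is controlled by `D₊^m` of `F'((1 - s) w + s w') (w' - w)`, `0 ≤ s < 1`, and the
discrete Leibniz rule reduces this to bounding the differences of `F'` along a sequence whose own
differences are bounded. Such bounds for compositions `G ∘ w` follow by induction on the order: the
first difference of `G ∘ w` is itself a difference `G(w') - G(w)` with `w'` the shift of `w`, so one
order is traded for one derivative of `G`.
-/

open fwdDiff Function

universe u v

section FwdDiffIter

lemma sum_range_choose_smul_eq_fwdDiff_iter {R E : Type*} [Ring R] [AddCommGroup E] [Module R E]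
    (f : ℕ → E) (j n : ℕ) :
    ∑ i ∈ range (j + 1), ((-1 : R) ^ i * (j.choose i : R)) • f (n + j - i) = Δ_[1] ^[j] f n := by
  rw [fwdDiff_iter_eq_sum_shift, ← sum_range_reflect]
  refine sum_congr rfl fun i hi ↦ ?_
  have hij : i ≤ j := mem_range_succ_iff.1 hi
  have hsub : j + 1 - 1 - i = j - i := by omega
  have hshift : n + j - (j - i) = n + i • 1 := by rw [smul_eq_mul]; omega
  rw [hsub, Nat.choose_symm hij, hshift, ← Int.cast_smul_eq_zsmul R]
  push_cast
  rfl

lemma fwdDiff_iter_comp_addMonoidHom {M M' G : Type*} [AddCommMonoid M] [AddCommMonoid M']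
    [AddCommGroup G] (φ : M →+ M') (f : M' → G) (h : M) (j : ℕ) (x : M) :
    Δ_[h] ^[j] (f ∘ φ) x = Δ_[φ h] ^[j] f (φ x) := by
  simp only [fwdDiff_iter_eq_sum_shift, comp_apply, map_add, map_nsmul]

lemma norm_inv_pow_smul_sum_choose_le_iff {E : Type*} [NormedAddCommGroup E] [NormedSpace ℝ E]
    {k : ℝ} (hk : 0 < k) (f : ℕ → E) (j n : ℕ) (δ : ℝ) :
    ‖(k ^ j)⁻¹ • ∑ i ∈ range (j + 1), ((-1 : ℝ) ^ i * (j.choose i : ℝ)) • f (n + j - i)‖ ≤ δ ↔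
      ‖Δ_[1] ^[j] f n‖ ≤ δ * k ^ j := by
  have hkj : 0 < k ^ j := pow_pos hk j
  rw [sum_range_choose_smul_eq_fwdDiff_iter, norm_smul, norm_inv, Real.norm_of_nonneg hkj.le,
    inv_mul_le_iff₀' hkj]

variable {𝕜 E : Type*} [NontriviallyNormedField 𝕜] [NormedAddCommGroup E] [NormedSpace 𝕜 E]

lemma hasDerivAt_fwdDiff_iter_apply {M : Type*} [AddCommMonoid M] {g : M → 𝕜 → E} {g' : M → E}
    {x : 𝕜} (hg : ∀ y, HasDerivAt (g y) (g' y) x) (h : M) (j : ℕ) (y : M) :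
    HasDerivAt (fun x ↦ Δ_[h] ^[j] (g · x) y) (Δ_[h] ^[j] g' y) x := by
  simp only [fwdDiff_iter_eq_sum_shift]
  exact .fun_sum fun i _ ↦ (hg _).fun_const_smul _

lemma hasDerivWithinAt_fwdDiff_iter {f f' : 𝕜 → E} {s t : Set 𝕜}
    (hf : ∀ x ∈ s, HasDerivWithinAt f (f' x) s x) {h : 𝕜} {j : ℕ}
    (hst : ∀ i ≤ j, Set.MapsTo (· + i • h) t s) {x : 𝕜} (hx : x ∈ t) :
    HasDerivWithinAt (Δ_[h] ^[j] f) (Δ_[h] ^[j] f' x) t x := by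
  rw [funext (fwdDiff_iter_eq_sum_shift h f j), fwdDiff_iter_eq_sum_shift]
  refine .fun_sum fun i hi ↦ .fun_const_smul _ ?_
  have hmaps := hst i (mem_range_succ_iff.1 hi)
  have htranslate : HasDerivWithinAt (· + i • h) 1 t x := (hasDerivWithinAt_id x t).add_const _
  simpa only [one_smul, comp_def] using (hf _ (hmaps hx)).scomp x htranslate hmaps

end FwdDiffIter

/-- The scaled forward differences `k⁻ⁱ Δⁱ f` of orders `i ≤ m` of the sequence `f` are bounded by
`C` on the window `0, …, N`, i.e. wherever they involve only `f 0, …, f N`. The scaling is written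
on the right-hand side, so that no division by `k` occurs. -/
def FwdDiffBound {E : Type*} [NormedAddCommGroup E] (k : ℝ) (N m : ℕ) (C : ℝ) (f : ℕ → E) : Prop :=
  ∀ i ≤ m, ∀ n, n + i ≤ N → ‖Δ_[1] ^[i] f n‖ ≤ C * k ^ i

namespace FwdDiffBound

variable {E : Type*} [NormedAddCommGroup E] {k C C' : ℝ} {N N' m m' : ℕ} {f g : ℕ → E}

lemma nonneg (hf : FwdDiffBound k N m C f) : 0 ≤ C :=
  (norm_nonneg (f 0)).trans <| by simpa using hf 0 m.zero_le 0 N.zero_le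

lemma of_le (hf : FwdDiffBound k N m C f) (hN : N' ≤ N) (hm : m' ≤ m) :
    FwdDiffBound k N' m' C f :=
  fun i hi n hn ↦ hf i (hi.trans hm) n (hn.trans hN)

lemma mono (hf : FwdDiffBound k N m C f) (hk : 0 ≤ k) (hC : C ≤ C') :
    FwdDiffBound k N m C' f :=
  fun i hi n hn ↦ (hf i hi n hn).trans <| by gcongr

protected lemma add (hf : FwdDiffBound k N m C f) (hg : FwdDiffBound k N m C' g) :
    FwdDiffBound k N m (C + C') (f + g) := fun i hi n hn ↦ by
  rw [fwdDiff_iter_add, add_mul]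
  exact norm_add_le_of_le (hf i hi n hn) (hg i hi n hn)

lemma shift (hf : FwdDiffBound k (N + 1) m C f) :
    FwdDiffBound k N m C (fun n ↦ f (n + 1)) := fun i hi n hn ↦ by
  rw [fwdDiff_iter_comp_add]
  exact hf i hi (n + 1) (by omega)

protected lemma fwdDiff (hf : FwdDiffBound k (N + 1) (m + 1) C f) :
    FwdDiffBound k N m (C * k) (Δ_[1] f) := fun i hi n hn ↦ by
  rw [← iterate_succ_apply, mul_assoc, ← pow_succ']
  exact hf (i + 1) (by omega) n (by omega)

end FwdDiffBound

lemma convex_setOf_fwdDiffBound {E : Type*} [NormedAddCommGroup E] [NormedSpace ℝ E]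
    (k : ℝ) (N m : ℕ) (C : ℝ) : Convex ℝ {f : ℕ → E | FwdDiffBound k N m C f} := by
  intro f hf g hg a b ha hb hab i hi n hn
  rw [fwdDiff_iter_add, fwdDiff_iter_const_smul, fwdDiff_iter_const_smul, ← mem_closedBall_zero_iff]
  exact convex_closedBall 0 (C * k ^ i) (mem_closedBall_zero_iff.2 (hf i hi n hn))
    (mem_closedBall_zero_iff.2 (hg i hi n hn)) ha hb hab

protected lemma FwdDiffBound.lineMap {E : Type*} [NormedAddCommGroup E] [NormedSpace ℝ E]
    {k C : ℝ} {N m : ℕ} {f g : ℕ → E} (hf : FwdDiffBound k N m C f) (hg : FwdDiffBound k N m C g)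
    {s : ℝ} (hs : s ∈ Set.Icc 0 1) : FwdDiffBound k N m C (AffineMap.lineMap f g s) :=
  Convex.lineMap_mem (s := {f | FwdDiffBound k N m C f}) (convex_setOf_fwdDiffBound k N m C)
    hf hg hs

section Leibniz

variable {𝕜 E F : Type*} [NontriviallyNormedField 𝕜] [NormedAddCommGroup E] [NormedSpace 𝕜 E]
  [NormedAddCommGroup F] [NormedSpace 𝕜 F]

lemma fwdDiff_clm_apply {M : Type*} [AddCommMonoid M] (h : M) (A : M → E →L[𝕜] F) (e : M → E) :
    Δ_[h] (fun n ↦ A n (e n)) =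
      (fun n ↦ A (n + h) (Δ_[h] e n)) + fun n ↦ (Δ_[h] A n) (e n) := by
  ext n
  simp [fwdDiff]

lemma norm_fwdDiff_iter_clm_apply_le {k a b : ℝ} {N j : ℕ} {A : ℕ → E →L[𝕜] F} {e : ℕ → E}
    (hA : FwdDiffBound k N j a A) (he : FwdDiffBound k N j b e) {n : ℕ} (hn : n + j ≤ N) :
    ‖Δ_[1] ^[j] (fun n ↦ A n (e n)) n‖ ≤ 2 ^ j * (a * b) * k ^ j := by
  induction j generalizing N a b A e with
  | zero =>
    have hAn : ‖A n‖ ≤ a := by simpa using hA 0 le_rfl n hn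
    have hen : ‖e n‖ ≤ b := by simpa using he 0 le_rfl n hn
    simpa using (A n).le_of_opNorm_le_of_le hAn hen
  | succ j ih =>
    obtain ⟨N, rfl⟩ : ∃ N', N = N' + 1 := ⟨N - 1, by omega⟩
    have hnN : n + j ≤ N := by omega
    rw [iterate_succ_apply, fwdDiff_clm_apply, fwdDiff_iter_add]
    calc _ ≤ 2 ^ j * (a * (b * k)) * k ^ j + 2 ^ j * (a * k * b) * k ^ j :=
          norm_add_le_of_le
            (ih (hA.shift.of_le le_rfl j.le_succ) he.fwdDiff hnN)
            (ih hA.fwdDiff (he.of_le N.le_succ j.le_succ) hnN)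
      _ = 2 ^ (j + 1) * (a * b) * k ^ (j + 1) := by ring

end Leibniz

section Composition

open AffineMap (lineMap)

lemma norm_fwdDiff_iter_comp_sub_comp_le {X Y : Type*} [NormedAddCommGroup X] [NormedSpace ℝ X]
    [NormedAddCommGroup Y] [NormedSpace ℝ Y] {G : X → Y} (hG : Differentiable ℝ G)
    {k a b : ℝ} {N j : ℕ} {w w' : ℕ → X}
    (hdG : ∀ s ∈ Set.Ico (0 : ℝ) 1, FwdDiffBound k N j a (fderiv ℝ G ∘ lineMap w w' s))
    (hsub : FwdDiffBound k N j b (w' - w)) {n : ℕ} (hn : n + j ≤ N) :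
    ‖Δ_[1] ^[j] (G ∘ w' - G ∘ w) n‖ ≤ 2 ^ j * (a * b) * k ^ j := by
  have hderiv (s : ℝ) : HasDerivAt (fun s ↦ Δ_[1] ^[j] (G ∘ lineMap w w' s) n)
      (Δ_[1] ^[j] (fun i ↦ fderiv ℝ G (lineMap w w' s i) ((w' - w) i)) n) s := by
    refine hasDerivAt_fwdDiff_iter_apply (g := fun i s ↦ G (lineMap w w' s i)) (fun i ↦ ?_) 1 j n
    simp only [AffineMap.pi_lineMap_apply]
    exact (hG _).hasFDerivAt.comp_hasDerivAt s AffineMap.hasDerivAt_lineMap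
  have hmvt := norm_image_sub_le_of_norm_deriv_le_segment_01'
    (fun s _ ↦ (hderiv s).hasDerivWithinAt)
    (fun s hs ↦ norm_fwdDiff_iter_clm_apply_le (hdG s hs) hsub hn)
  rw [sub_eq_add_neg, ← neg_one_smul ℤ, fwdDiff_iter_add, fwdDiff_iter_const_smul]
  simpa [sub_eq_add_neg] using hmvt

/-- A bound for the scaled differences of order at most `j` of `G ∘ w`, when `B` bounds the
derivatives of `G` of order at most `j` and `M` bounds the scaled differences of `w`. -/
noncomputable def fwdDiffCompConst (B M : ℝ) (j : ℕ) : ℝ :=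
  B * ∏ i ∈ range j, (2 ^ i * (1 + M))

lemma fwdDiffCompConst_succ (B M : ℝ) (j : ℕ) :
    fwdDiffCompConst B M (j + 1) = 2 ^ j * (1 + M) * fwdDiffCompConst B M j := by
  rw [fwdDiffCompConst, fwdDiffCompConst, prod_range_succ]
  ring

lemma fwdDiffCompConst_nonneg {B M : ℝ} (hB : 0 ≤ B) (hM : 0 ≤ M) (j : ℕ) :
    0 ≤ fwdDiffCompConst B M j := by
  unfold fwdDiffCompConst
  positivity

lemma fwdDiffCompConst_le_succ {B M : ℝ} (hB : 0 ≤ B) (hM : 0 ≤ M) (j : ℕ) :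
    fwdDiffCompConst B M j ≤ fwdDiffCompConst B M (j + 1) := by
  rw [fwdDiffCompConst_succ]
  exact le_mul_of_one_le_left (fwdDiffCompConst_nonneg hB hM j)
    (one_le_mul_of_one_le_of_one_le (one_le_pow₀ one_le_two) (le_add_of_nonneg_right hM))

variable {X : Type u} [NormedAddCommGroup X] [NormedSpace ℝ X] {B M k : ℝ} {N j : ℕ}

-- The induction replaces `Y` by `X →L[ℝ] Y`, so the universe of `Y` has to absorb that of `X`.
protected theorem FwdDiffBound.comp {Y : Type (max u v)} [NormedAddCommGroup Y] [NormedSpace ℝ Y]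
    {G : X → Y} (hG : ContDiff ℝ j G) (hB : ∀ i ≤ j, ∀ x, ‖iteratedFDeriv ℝ i G x‖ ≤ B)
    (hk : 0 ≤ k) {w : ℕ → X} (hw : FwdDiffBound k N j M w) :
    FwdDiffBound k N j (fwdDiffCompConst B M j) (G ∘ w) := by
  induction j generalizing N Y w with
  | zero =>
    intro i hi n _
    obtain rfl : i = 0 := Nat.le_zero.1 hi
    simpa [fwdDiffCompConst] using hB 0 le_rfl (w n)
  | succ j ih =>
    have hB0 : 0 ≤ B := (norm_nonneg _).trans (hB 0 (Nat.zero_le _) 0)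
    have hM0 : 0 ≤ M := hw.nonneg
    have hconst := fwdDiffCompConst_nonneg hB0 hM0 j
    intro i hi n hn
    rcases hi.lt_or_eq with hlt | rfl
    · have hij : i ≤ j := Nat.lt_succ_iff.1 hlt
      refine (ih (hG.of_le (by norm_cast; omega)) (fun i hi ↦ hB i (by omega))
        (hw.of_le le_rfl j.le_succ) i hij n hn).trans ?_
      gcongr
      exact fwdDiffCompConst_le_succ hB0 hM0 j
    · obtain ⟨N, rfl⟩ : ∃ N', N = N' + 1 := ⟨N - 1, by omega⟩
      have hdG : ∀ s ∈ Set.Ico (0 : ℝ) 1, FwdDiffBound k N j (fwdDiffCompConst B M j)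
          (fderiv ℝ G ∘ lineMap w (fun n ↦ w (n + 1)) s) := fun s hs ↦
        ih (hG.fderiv_right (by norm_cast))
          (fun i hi x ↦ norm_iteratedFDeriv_fderiv.trans_le (hB (i + 1) (by omega) x))
          ((hw.of_le N.le_succ j.le_succ).lineMap (hw.shift.of_le le_rfl j.le_succ)
            (Set.Ico_subset_Icc_self hs))
      calc ‖Δ_[1] ^[j + 1] (G ∘ w) n‖
          ≤ 2 ^ j * (fwdDiffCompConst B M j * (M * k)) * k ^ j :=
            norm_fwdDiff_iter_comp_sub_comp_le (hG.differentiable (by norm_cast)) hdG hw.fwdDiff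
              (by omega)
        _ = 2 ^ j * M * fwdDiffCompConst B M j * k ^ (j + 1) := by ring
        _ ≤ fwdDiffCompConst B M (j + 1) * k ^ (j + 1) := by
            rw [fwdDiffCompConst_succ]
            gcongr
            linarith

theorem norm_fwdDiff_iter_comp_sub_comp_le_of_contDiff {Y : Type v} [NormedAddCommGroup Y]
    [NormedSpace ℝ Y] {G : X → Y} (hG : ContDiff ℝ (j + 1) G)
    (hB : ∀ i, 1 ≤ i → i ≤ j + 1 → ∀ x, ‖iteratedFDeriv ℝ i G x‖ ≤ B) (hk : 0 ≤ k)
    {w w' : ℕ → X} (hw : FwdDiffBound k N j M w) (hw' : FwdDiffBound k N j M w')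
    {b : ℝ} (hsub : FwdDiffBound k N j b (w' - w)) {n : ℕ} (hn : n + j ≤ N) :
    ‖Δ_[1] ^[j] (G ∘ w' - G ∘ w) n‖ ≤ 2 ^ j * (fwdDiffCompConst B M j * b) * k ^ j := by
  refine norm_fwdDiff_iter_comp_sub_comp_le (hG.differentiable (by norm_cast))
    (fun s hs ↦ ?_) hsub hn
  exact FwdDiffBound.comp.{u, v} (hG.fderiv_right le_rfl)
    (fun i hi x ↦ norm_iteratedFDeriv_fderiv.trans_le (hB (i + 1) (by omega) (by omega) x)) hk
    (hw.lineMap hw' (Set.Ico_subset_Icc_self hs))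

end Composition

section Sampling

variable {E : Type*} [NormedAddCommGroup E] [NormedSpace ℝ E] {f : ℝ → E} {a b : ℝ}

lemma norm_fwdDiff_iter_le_of_norm_iteratedDerivWithin_le (hab : a < b) {j : ℕ}
    (hf : ContDiffOn ℝ j f (Set.Icc a b)) {M : ℝ}
    (hM : ∀ x ∈ Set.Icc a b, ‖iteratedDerivWithin j f (Set.Icc a b) x‖ ≤ M)
    {k : ℝ} (hk : 0 ≤ k) {t : ℝ} (hat : a ≤ t) (htb : t + j * k ≤ b) :
    ‖Δ_[k] ^[j] f t‖ ≤ M * k ^ j := by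
  induction j generalizing f t with
  | zero => simpa using hM t ⟨hat, by simpa using htb⟩
  | succ j ih =>
    push_cast at htb
    have hderiv : ∀ x ∈ Set.Icc t (t + k), HasDerivWithinAt (Δ_[k] ^[j] f)
        (Δ_[k] ^[j] (derivWithin f (Set.Icc a b)) x) (Set.Icc t (t + k)) x := fun x hx ↦ by
      refine hasDerivWithinAt_fwdDiff_iter (fun y hy ↦
        (hf.differentiableOn (by norm_cast) y hy).hasDerivWithinAt) (fun i hi y hy ↦ ?_) hx
      have hik : (i : ℝ) * k ≤ j * k := by gcongr
      have hik0 : 0 ≤ (i : ℝ) * k := by positivity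
      rw [nsmul_eq_mul]
      exact ⟨by linarith [hy.1], by linarith [hy.2]⟩
    have hbound : ∀ x ∈ Set.Icc t (t + k),
        ‖Δ_[k] ^[j] (derivWithin f (Set.Icc a b)) x‖ ≤ M * k ^ j := fun x hx ↦ by
      refine ih (hf.derivWithin (uniqueDiffOn_Icc hab) (by norm_cast)) (fun y hy ↦ ?_)
        (hat.trans hx.1) (by linarith [hx.2])
      rw [← iteratedDerivWithin_succ']
      exact hM y hy
    have hmvt := (convex_Icc t (t + k)).norm_image_sub_le_of_norm_hasDerivWithin_le hderiv hbound
      (Set.left_mem_Icc.2 (by linarith)) (Set.right_mem_Icc.2 (by linarith))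
    rw [add_sub_cancel_left, Real.norm_of_nonneg hk, mul_assoc, ← pow_succ] at hmvt
    rwa [iterate_succ_apply']

lemma exists_norm_iteratedDerivWithin_le (hab : a < b) {m : ℕ}
    (hf : ContDiffOn ℝ m f (Set.Icc a b)) :
    ∃ M, ∀ i ≤ m, ∀ x ∈ Set.Icc a b, ‖iteratedDerivWithin i f (Set.Icc a b) x‖ ≤ M := by
  have hcont : ContinuousOn
      (fun x ↦ ∑ i ∈ range (m + 1), ‖iteratedDerivWithin i f (Set.Icc a b) x‖) (Set.Icc a b) :=
    continuousOn_finsetSum _ fun i hi ↦ (hf.continuousOn_iteratedDerivWithin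
      (by exact_mod_cast mem_range_succ_iff.1 hi) (uniqueDiffOn_Icc hab)).norm
  obtain ⟨M, hM⟩ := isCompact_Icc.exists_bound_of_continuousOn hcont
  refine ⟨M, fun i hi x hx ↦ ?_⟩
  calc _ ≤ ∑ i ∈ range (m + 1), ‖iteratedDerivWithin i f (Set.Icc a b) x‖ :=
        single_le_sum (f := fun i ↦ ‖iteratedDerivWithin i f (Set.Icc a b) x‖)
          (fun _ _ ↦ norm_nonneg _) (mem_range_succ_iff.2 hi)
    _ ≤ M := (Real.le_norm_self _).trans (hM x hx)

theorem exists_fwdDiffBound_of_contDiffOn {T : ℝ} (hT : 0 < T) {m : ℕ}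
    (hf : ContDiffOn ℝ m f (Set.Icc 0 T)) :
    ∃ M, ∀ k, 0 ≤ k → ∀ N : ℕ, N * k ≤ T → FwdDiffBound k N m M (fun n ↦ f (n * k)) := by
  obtain ⟨M, hM⟩ := exists_norm_iteratedDerivWithin_le hT hf
  refine ⟨M, fun k hk N hN i hi n hn ↦ ?_⟩
  have hsample : Δ_[1] ^[i] (fun n : ℕ ↦ f (n * k)) n = Δ_[k] ^[i] f (n * k) := by
    simpa [comp_def] using fwdDiff_iter_comp_addMonoidHom (multiplesHom ℝ k) f 1 i n
  have hend : (n : ℝ) * k + i * k ≤ T := by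
    rw [← add_mul]
    exact le_trans (by gcongr; exact_mod_cast hn) hN
  rw [hsample]
  exact norm_fwdDiff_iter_le_of_norm_iteratedDerivWithin_le hT
    (hf.of_le (by exact_mod_cast hi)) (hM i hi) hk (by positivity) hend

end Sampling

theorem forward_difference_of_F_bound_general
    {X Y : Type*} [NormedAddCommGroup X] [NormedSpace ℝ X] [NormedAddCommGroup Y] [NormedSpace ℝ Y]
    (T : ℝ) (hT : 0 < T) (m : ℕ) (F : X → Y) (hF : ContDiff ℝ (m + 1) F)
    (B : ℝ) (hB : ∀ i : ℕ, 1 ≤ i → i ≤ m + 1 → ∀ x : X, ‖iteratedFDeriv ℝ i F x‖ ≤ B)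
    (u : ℝ → X) (hu : ContDiffOn ℝ m u (Set.Icc 0 T)) (δ₀ : ℝ) :
    ∃ C : ℝ, ∀ k : ℝ, 0 < k → ∀ δ ≤ δ₀, ∀ N : ℕ, (N : ℝ) * k ≤ T →
      ∀ v : ℕ → X,
        (∀ j : ℕ, j ≤ m → ∀ n : ℕ, n + j ≤ N →
          ‖(k ^ j)⁻¹ • ∑ i ∈ range (j + 1),
              ((-1 : ℝ) ^ i * (j.choose i : ℝ)) •
                (v (n + j - i) - u (((n + j - i : ℕ) : ℝ) * k))‖ ≤ δ) →
        ∀ n : ℕ, n + m ≤ N →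
          ‖(k ^ m)⁻¹ • ∑ i ∈ range (m + 1),
              ((-1 : ℝ) ^ i * (m.choose i : ℝ)) •
                (F (v (n + m - i)) - F (u (((n + m - i : ℕ) : ℝ) * k)))‖ ≤ C * δ := by
  obtain ⟨M, hM⟩ := exists_fwdDiffBound_of_contDiffOn hT hu
  refine ⟨2 ^ m * fwdDiffCompConst B (δ₀ + M) m, fun k hk δ hδ N hN v hv n hn ↦ ?_⟩
  let w : ℕ → X := fun n ↦ u (n * k)
  have hw : FwdDiffBound k N m M w := hM k hk.le N hN
  have herr : FwdDiffBound k N m δ (v - w) := fun j hj n hn ↦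
    (norm_inv_pow_smul_sum_choose_le_iff hk (v - w) j n δ).1 (hv j hj n hn)
  have hδ₀ : 0 ≤ δ₀ := herr.nonneg.trans hδ
  have hv' : FwdDiffBound k N m (δ₀ + M) v := by
    simpa using (herr.add hw).mono hk.le (add_le_add_left hδ M)
  have hw' : FwdDiffBound k N m (δ₀ + M) w := hw.mono hk.le (le_add_of_nonneg_left hδ₀)
  refine (norm_inv_pow_smul_sum_choose_le_iff hk (F ∘ v - F ∘ w) m n _).2 ?_
  rw [mul_assoc (2 ^ m)]
  exact norm_fwdDiff_iter_comp_sub_comp_le_of_contDiff hF hB hk.le hw' hv' herr hn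

/-- **forward differences of `F` along a DCC sequence.**
Let `F : X → X` be `C^{m+1}` with all Fréchet derivatives of order `1, …, m+1`
uniformly bounded (by `B`), and `u ∈ C^{m+1}([0,T], X)`. Then there is a constant `C`,
depending only on `m`, `T`, `C₀`, the bound `B`, and the derivatives of `u` up to order
`m+1`, such that for every `0 < k ≤ 1` and every sequence `{vⁿ}` with
`‖D₊^j(vⁿ − u(t_n))‖ ≤ C₀ k⁴` for all `j ≤ m`, `n + j ≤ N` (where `t_n = nk`, `Nk ≤ T`),
one has `‖D₊^m(F(vⁿ) − F(u(t_n)))‖ ≤ C k⁴` for all `n` with `n + m ≤ N`. -/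
theorem forward_difference_of_F_bound
    {X : Type*} [NormedAddCommGroup X] [NormedSpace ℝ X] [CompleteSpace X]
    (T : ℝ) (hT : 0 < T) (m : ℕ) (hm : 0 < m)
    (F : X → X) (hF : ContDiff ℝ (m + 1) F)
    (B : ℝ) (hB : ∀ i : ℕ, 1 ≤ i → i ≤ m + 1 → ∀ x : X, ‖iteratedFDeriv ℝ i F x‖ ≤ B)
    (u : ℝ → X) (hu : ContDiffOn ℝ (m + 1) u (Set.Icc 0 T))
    (C0 : ℝ) (hC0 : 0 < C0) :
    ∃ C : ℝ, ∀ k : ℝ, 0 < k → k ≤ 1 → ∀ N : ℕ, (N : ℝ) * k ≤ T →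
      ∀ v : ℕ → X,
        (∀ j : ℕ, j ≤ m → ∀ n : ℕ, n + j ≤ N →
          ‖(k ^ j)⁻¹ • ∑ i ∈ Finset.range (j + 1),
              ((-1 : ℝ) ^ i * (j.choose i : ℝ)) •
                (v (n + j - i) - u (((n + j - i : ℕ) : ℝ) * k))‖ ≤ C0 * k ^ 4) →
        ∀ n : ℕ, n + m ≤ N →
          ‖(k ^ m)⁻¹ • ∑ i ∈ Finset.range (m + 1),
              ((-1 : ℝ) ^ i * (m.choose i : ℝ)) •
                (F (v (n + m - i)) - F (u (((n + m - i : ℕ) : ℝ) * k)))‖ ≤ C * k ^ 4 := by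
  obtain ⟨C, hC⟩ := forward_difference_of_F_bound_general T hT m F hF B hB u
    (hu.of_le (by norm_cast; omega)) C0
  exact ⟨C * C0, fun k hk hk1 N hN v hv n hn ↦ (hC k hk (C0 * k ^ 4)
    (mul_le_of_le_one_right hC0.le (pow_le_one₀ hk.le hk1)) N hN v hv n hn).trans_eq (by ring)⟩
end

section
/- Let λ ∈ ℂ and k > 0, set z = λk, and apply the DC6RK2/4 scheme to the scalar problem u' = λu, u(0) = 1 (i.e. F(t,x) = λx on X = ℂ). Then for every n the inner RK4 stages satisfy u^{4,n,i} = q(z/5)^i u^{6,n} for i = 0, …, 5, the correction terms satisfy a_n = r(z) u^{6,n} and b_n = s(z) u^{6,n}, and the scheme reduces to u^{6,n+1} = R(z) u^{6,n}, so that u^{6,n} = R(z)^n; here q(z) = 1 + z + z²/2 + z³/6 + z⁴/24, r(z) = (125/384)(−3 − q(z/5) + 18q(z/5)² − 18q(z/5)³ + q(z/5)⁴ + 3q(z/5)⁵), s(z) = (25/768)(145 − 387q(z/5) + 402q(z/5)² − 238q(z/5)³ + 93q(z/5)⁴ − 15q(z/5)⁵), and R(z) = 1 + z + z²/2 + r(z)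 + z·s(z). -/
open Finset

variable {X : Type*} [NormedAddCommGroup X] [NormedSpace ℝ X] [CompleteSpace X]

/-- Stability function of the classical fourth-order Runge–Kutta method. -/
noncomputable def rk4Stab (z : ℂ) : ℂ :=
  1 + z + z ^ 2 / 2 + z ^ 3 / 6 + z ^ 4 / 24

/-- The function `r` in the stability analysis of DC6RK2/4. -/
noncomputable def dcStabR (z : ℂ) : ℂ :=
  (125 / 384 : ℂ) * (-3 - rk4Stab (z / 5) + 18 * rk4Stab (z / 5) ^ 2
    - 18 * rk4Stab (z / 5) ^ 3 + rk4Stab (z / 5) ^ 4 + 3 * rk4Stab (z / 5) ^ 5)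

/-- The function `s` in the stability analysis of DC6RK2/4. -/
noncomputable def dcStabS (z : ℂ) : ℂ :=
  (25 / 768 : ℂ) * (145 - 387 * rk4Stab (z / 5) + 402 * rk4Stab (z / 5) ^ 2
    - 238 * rk4Stab (z / 5) ^ 3 + 93 * rk4Stab (z / 5) ^ 4 - 15 * rk4Stab (z / 5) ^ 5)

/-- The stability function `R` of the DC6RK2/4 scheme. -/
noncomputable def dcStab (z : ℂ) : ℂ :=
  1 + z + z ^ 2 / 2 + dcStabR z + z * dcStabS z

section LinearProblem

variable {E : Type*} [NormedAddCommGroup E] [NormedSpace ℝ E] [Module ℂ E] [IsScalarTower ℝ ℂ E]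
  (l : ℂ)

theorem rk4Step_const_smul (t h : ℝ) (x : E) :
    rk4Step (fun _ y => l • y) t h x = rk4Stab (l * h) • x := by
  simp only [rk4Step, rk4Stab]
  match_scalars
  simp only [Complex.coe_algebraMap]
  ring

theorem rk4Iter_const_smul (t h : ℝ) (x : E) (i : ℕ) :
    rk4Iter (fun _ y => l • y) t h x i = rk4Stab (l * h) ^ i • x := by
  induction i with
  | zero => rw [rk4Iter, pow_zero, one_smul]
  | succ i ih => rw [rk4Iter, rk4Step_const_smul, ih, pow_succ', mul_smul]

theorem rk4Iter_const_smul_div_five (t k : ℝ) (x : E) (i : ℕ) :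
    rk4Iter (fun _ y => l • y) t (k / 5) x i = rk4Stab (l * k / 5) ^ i • x := by
  rw [rk4Iter_const_smul, Complex.ofReal_div, Complex.ofReal_ofNat, mul_div_assoc]

theorem dcA_rk4Iter_const_smul (t k : ℝ) (x : E) :
    dcA (rk4Iter (fun _ y => l • y) t (k / 5) x) = dcStabR (l * k) • x := by
  simp only [dcA, rk4Iter_const_smul_div_five, dcStabR]
  module

theorem dcB_rk4Iter_const_smul (t k : ℝ) (x : E) :
    dcB (rk4Iter (fun _ y => l • y) t (k / 5) x) = dcStabS (l * k) • x := by
  simp only [dcB, rk4Iter_const_smul_div_five, dcStabS]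
  module

theorem dcStep_const_smul (t k : ℝ) (x : E) :
    dcStep (fun _ y => l • y) t k x = dcStab (l * k) • x := by
  simp only [dcStep, dcA_rk4Iter_const_smul, dcB_rk4Iter_const_smul, dcStab]
  match_scalars
  simp only [Complex.coe_algebraMap]
  ring

theorem dcSeq_const_smul (u₀ : E) (k : ℝ) (n : ℕ) :
    dcSeq (fun _ y => l • y) u₀ k n = dcStab (l * k) ^ n • u₀ := by
  induction n with
  | zero => rw [dcSeq, pow_zero, one_smul]
  | succ n ih => rw [dcSeq, dcStep_const_smul, ih, pow_succ', mul_smul]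

theorem dc6rk24_stability_function_general (u₀ : E) (k : ℝ) :
    let F : ℝ → E → E := fun _ x => l • x
    let z : ℂ := l * (k : ℂ)
    let U : ℕ → E := dcSeq F u₀ k
    (∀ n i : ℕ, rk4Iter F ((n : ℝ) * k) (k / 5) (U n) i = rk4Stab (z / 5) ^ i • U n) ∧
    (∀ n : ℕ, dcA (rk4Iter F ((n : ℝ) * k) (k / 5) (U n)) = dcStabR z • U n) ∧
    (∀ n : ℕ, dcB (rk4Iter F ((n : ℝ) * k) (k / 5) (U n)) = dcStabS z • U n) ∧
    (∀ n : ℕ, U (n + 1) = dcStab z • U n) ∧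
    (∀ n : ℕ, U n = dcStab z ^ n • u₀) := by
  intro F z U
  exact ⟨fun n i => rk4Iter_const_smul_div_five l _ k (U n) i,
    fun n => dcA_rk4Iter_const_smul l _ k (U n),
    fun n => dcB_rk4Iter_const_smul l _ k (U n),
    fun n => dcStep_const_smul l _ k (U n),
    fun n => dcSeq_const_smul l u₀ k n⟩

end LinearProblem

/-- **stability analysis of DC6RK2/4 on `u' = λu`.**
Apply DC6RK2/4 with step `k > 0` to `u' = λu`, `u(0) = 1` on `ℂ`, and set `z = λk`.
Then the inner RK4 stages satisfy `u^{4,n,i} = q(z/5)^i u^{6,n}` for `i = 0, …, 5`,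
the correction terms satisfy `aₙ = r(z) u^{6,n}` and `bₙ = s(z) u^{6,n}`, the scheme
reduces to `u^{6,n+1} = R(z) u^{6,n}`, and hence `u^{6,n} = R(z)^n`. -/
theorem dc6rk24_stability_function (l : ℂ) (k : ℝ) (hk : 0 < k) :
    let F : ℝ → ℂ → ℂ := fun _ x => l * x
    let z : ℂ := l * (k : ℂ)
    let U : ℕ → ℂ := dcSeq F 1 k
    (∀ n : ℕ, ∀ i : ℕ, i ≤ 5 →
        rk4Iter F ((n : ℝ) * k) (k / 5) (U n) i = rk4Stab (z / 5) ^ i * U n) ∧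
    (∀ n : ℕ, dcA (rk4Iter F ((n : ℝ) * k) (k / 5) (U n)) = dcStabR z * U n) ∧
    (∀ n : ℕ, dcB (rk4Iter F ((n : ℝ) * k) (k / 5) (U n)) = dcStabS z * U n) ∧
    (∀ n : ℕ, U (n + 1) = dcStab z * U n) ∧
    (∀ n : ℕ, U n = dcStab z ^ n) := by
  obtain ⟨stages, corrA, corrB, step, closed⟩ := dc6rk24_stability_function_general l (1 : ℂ) k
  exact ⟨fun n i _ => stages n i, corrA, corrB, step, fun n => (closed n).trans (mul_one _)⟩
end

section
/- Let q(z) = 1 + z + z²/2 + z³/6 + z⁴/24, r(z) = (125/384)(−3 − q(z/5) + 18q(z/5)² − 18q(z/5)³ + q(z/5)⁴ + 3q(z/5)⁵), s(z) = (25/768)(145 − 387q(z/5) + 402q(z/5)² − 238q(z/5)³ + 93q(z/5)⁴ − 15q(z/5)⁵), and R(z) = 1 + z + z²/2 + r(z) + z·s(z). Then R is a polynomial of degree 21, and the polynomial R(z) − Σ_{i=0}^{6} z^i/i! is divisible by z^7; equivalently, the coefficient of z^i in R equals 1/i! for every i = 0, 1, …, 6. -/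
open Polynomial

/-- The stability polynomial of RK4, `q(z) = 1 + z + z²/2 + z³/6 + z⁴/24`, over `ℚ`. -/
noncomputable def qPoly : Polynomial ℚ :=
  C 1 + X + C (1 / 2) * X ^ 2 + C (1 / 6) * X ^ 3 + C (1 / 24) * X ^ 4

/-- `q(z/5)` as a polynomial in `z`. -/
noncomputable def qPoly5 : Polynomial ℚ := qPoly.comp (C (1 / 5) * X)

/-- The polynomial `r(z)` in the stability function of DC6RK2/4. -/
noncomputable def rPoly : Polynomial ℚ :=
  C (125 / 384) * (C (-3) - qPoly5 + C 18 * qPoly5 ^ 2 - C 18 * qPoly5 ^ 3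
    + qPoly5 ^ 4 + C 3 * qPoly5 ^ 5)

/-- The polynomial `s(z)` in the stability function of DC6RK2/4. -/
noncomputable def sPoly : Polynomial ℚ :=
  C (25 / 768) * (C 145 - C 387 * qPoly5 + C 402 * qPoly5 ^ 2 - C 238 * qPoly5 ^ 3
    + C 93 * qPoly5 ^ 4 - C 15 * qPoly5 ^ 5)

/-- The stability polynomial `R(z) = 1 + z + z²/2 + r(z) + z·s(z)` of DC6RK2/4. -/
noncomputable def RPoly : Polynomial ℚ :=
  C 1 + X + C (1 / 2) * X ^ 2 + rPoly + X * sPoly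

/-!
Write `r(z) = r̂(q(z/5))` and `s(z) = ŝ(q(z/5))` with quintic polynomials `r̂ = ∑ aₖ wᵏ` and
`ŝ = ∑ bₖ wᵏ`. Since `q(z/5)` has degree 4, `r` and `s` have degree 20 and `z s(z)` decides the
degree of `R`.

For the order, `r̂` has a triple and `ŝ` a double zero at `w = 1`, so replacing `q(z/5)` by
`exp(z/5)`, which changes it only by `O(z⁵)`, changes `R` only by `O(z⁷)`. After the replacement,
`i!` times the coefficient of `zⁱ` in `R` is the value at `f(t) = tⁱ` of the functional
`f(0) + f'(0) + f''(0)/2 + ∑ aₖ f(k/5) + ∑ bₖ f'(k/5)`, and it remains to see that this Hermite-type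
formula reproduces `f(1) = 1` for `i ≤ 6`.
-/

open scoped PowerSeries

theorem X_pow_dvd_sub_sum_C_mul_X_pow_iff {A : Type*} [Ring A] {p : A[X]} {a : ℕ → A} {n : ℕ} :
    X ^ n ∣ p - ∑ i ∈ Finset.range n, C (a i) * X ^ i ↔ ∀ i < n, p.coeff i = a i := by
  rw [X_pow_dvd_iff]
  refine forall₂_congr fun i hi ↦ ?_
  rw [coeff_sub, finsetSum_coeff, sub_eq_zero]
  simp only [coeff_C_mul_X_pow, Finset.sum_ite_eq, Finset.mem_range, hi, if_true]

theorem pow_add_dvd_pow_succ_sub_pow_succ {A : Type*} [CommRing A] {x a b : A} {m n : ℕ}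
    (ha : x ∣ a) (hb : x ∣ b) (hab : x ^ n ∣ a - b) :
    x ^ (m + n) ∣ a ^ (m + 1) - b ^ (m + 1) := by
  rw [← (Commute.all a b).geom_sum₂_mul, pow_add, Nat.add_sub_cancel]
  refine mul_dvd_mul (Finset.dvd_sum fun i hi ↦ ?_) hab
  have him : i ≤ m := Nat.lt_succ_iff.1 (Finset.mem_range.1 hi)
  calc x ^ m = x ^ i * x ^ (m - i) := (pow_mul_pow_sub x him).symm
    _ ∣ a ^ i * b ^ (m - i) := mul_dvd_mul (pow_dvd_pow_of_dvd ha i) (pow_dvd_pow_of_dvd hb _)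

theorem pow_add_dvd_aeval_sub_aeval {R A : Type*} [CommRing R] [CommRing A] [Algebra R A]
    {p : R[X]} {c : R} {x a b : A} {m n : ℕ} (hp : (X - C c) ^ (m + 1) ∣ p)
    (ha : x ∣ a - algebraMap R A c) (hb : x ∣ b - algebraMap R A c) (hab : x ^ n ∣ a - b) :
    x ^ (m + n) ∣ aeval a p - aeval b p := by
  obtain ⟨g, rfl⟩ := hp
  have hpow : x ^ (m + n) ∣
      (a - algebraMap R A c) ^ (m + 1) - (b - algebraMap R A c) ^ (m + 1) :=
    pow_add_dvd_pow_succ_sub_pow_succ ha hb (by rwa [sub_sub_sub_cancel_right])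
  have hb_pow : x ^ m ∣ (b - algebraMap R A c) ^ (m + 1) :=
    (pow_dvd_pow_of_dvd hb m).trans (pow_dvd_pow _ m.le_succ)
  have hg : x ^ n ∣ aeval a g - aeval b g := by
    simpa only [eval_map_algebraMap] using
      hab.trans (sub_dvd_eval_sub a b (g.map (algebraMap R A)))
  have hsplit : aeval a ((X - C c) ^ (m + 1) * g) - aeval b ((X - C c) ^ (m + 1) * g) =
      ((a - algebraMap R A c) ^ (m + 1) - (b - algebraMap R A c) ^ (m + 1)) * aeval a g +
        (b - algebraMap R A c) ^ (m + 1) * (aeval a g - aeval b g) := by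
    simp only [map_mul, map_pow, map_sub, aeval_X, aeval_C]
    ring
  rw [hsplit]
  exact dvd_add (hpow.mul_right _) (pow_add x m n ▸ mul_dvd_mul hb_pow hg)

theorem coe_comp_eq_aeval {A : Type*} [CommSemiring A] (p q : A[X]) :
    ((p.comp q : A[X]) : A⟦X⟧) = aeval (q : A⟦X⟧) p := by
  have hC : (coeToPowerSeries.ringHom (R := A)).comp C = algebraMap A A⟦X⟧ := by
    ext
    simp
  rw [comp, ← coeToPowerSeries.ringHom_apply, hom_eval₂, hC, coeToPowerSeries.ringHom_apply,
    aeval_def]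

/-- The moment `∑ₖ pₖ (k c)ⁱ` of the coefficients `pₖ` of `p`, seen as weights at the equidistant
nodes `k c`. It computes the Taylor coefficients of `p(exp(c z))`. -/
noncomputable def nodeMoment {A : Type*} [Semiring A] (p : A[X]) (c : A) (i : ℕ) : A :=
  p.sum fun k a ↦ a * (k * c) ^ i

theorem nodeMoment_eq_sum_range {A : Type*} [Semiring A] {p : A[X]} {n : ℕ}
    (hn : p.natDegree < n) (c : A) (i : ℕ) :
    nodeMoment p c i = ∑ k ∈ Finset.range n, p.coeff k * (k * c) ^ i :=
  sum_over_range' p (fun k ↦ zero_mul ((k * c) ^ i)) n hn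

section RescaleExp

variable {A : Type*} [CommRing A] [Algebra ℚ A]

theorem X_dvd_rescale_exp_sub_one (c : A) :
    PowerSeries.X ∣ PowerSeries.rescale c (PowerSeries.exp A) - 1 := by
  rw [PowerSeries.X_dvd_iff, map_sub, ← PowerSeries.coeff_zero_eq_constantCoeff_apply,
    PowerSeries.coeff_rescale, PowerSeries.coeff_exp]
  simp

theorem coeff_aeval_rescale_exp (p : A[X]) (c : A) (i : ℕ) :
    PowerSeries.coeff i (aeval (PowerSeries.rescale c (PowerSeries.exp A)) p) =
      nodeMoment p c i * algebraMap ℚ A (1 / i.factorial) := by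
  rw [aeval_eq_sum_range, nodeMoment_eq_sum_range p.natDegree.lt_succ_self, map_sum,
    Finset.sum_mul]
  refine Finset.sum_congr rfl fun k _ ↦ ?_
  rw [← map_pow, PowerSeries.exp_pow_eq_rescale_exp, PowerSeries.coeff_smul,
    PowerSeries.coeff_rescale, PowerSeries.coeff_rescale, PowerSeries.coeff_exp, smul_eq_mul]
  ring

-- At `i = 0` the truncated exponent `i - 1` is harmless because of the factor `i`.
theorem coeff_X_mul_aeval_rescale_exp (p : A[X]) (c : A) (i : ℕ) :
    PowerSeries.coeff i
        (PowerSeries.X * aeval (PowerSeries.rescale c (PowerSeries.exp A)) p) =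
      i * nodeMoment p c (i - 1) * algebraMap ℚ A (1 / i.factorial) := by
  cases i with
  | zero => rw [PowerSeries.coeff_zero_X_mul, Nat.cast_zero, zero_mul, zero_mul]
  | succ j =>
    have hfactorial : (1 / j.factorial : ℚ) = (j + 1 : ℕ) * (1 / (j + 1).factorial) := by
      rw [Nat.factorial_succ]
      push_cast
      field_simp
    rw [PowerSeries.coeff_succ_X_mul, coeff_aeval_rescale_exp, hfactorial, map_mul, map_natCast,
      Nat.add_sub_cancel]
    ring

end RescaleExp

/-- The polynomial `r̂` with `r(z) = r̂(q(z/5))`. -/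
noncomputable def rOuter : ℚ[X] :=
  C (125 / 384) * (C (-3) - X + C 18 * X ^ 2 - C 18 * X ^ 3 + X ^ 4 + C 3 * X ^ 5)

/-- The polynomial `ŝ` with `s(z) = ŝ(q(z/5))`. -/
noncomputable def sOuter : ℚ[X] :=
  C (25 / 768) * (C 145 - C 387 * X + C 402 * X ^ 2 - C 238 * X ^ 3 + C 93 * X ^ 4 - C 15 * X ^ 5)

theorem rPoly_eq_comp : rPoly = rOuter.comp qPoly5 := by
  simp only [rPoly, rOuter, mul_comp, add_comp, sub_comp, pow_comp, C_comp, X_comp]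

theorem sPoly_eq_comp : sPoly = sOuter.comp qPoly5 := by
  simp only [sPoly, sOuter, mul_comp, add_comp, sub_comp, pow_comp, C_comp, X_comp]

theorem natDegree_qPoly5 : qPoly5.natDegree = 4 := by
  have hq : qPoly.natDegree = 4 := by
    unfold qPoly
    compute_degree!
  rw [qPoly5, natDegree_comp, hq, natDegree_C_mul_X _ (by norm_num)]

theorem natDegree_rOuter : rOuter.natDegree = 5 := by
  rw [rOuter, natDegree_C_mul (by norm_num)]
  compute_degree!

theorem natDegree_sOuter : sOuter.natDegree = 5 := by
  rw [sOuter, natDegree_C_mul (by norm_num)]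
  compute_degree!

theorem natDegree_RPoly : RPoly.natDegree = 21 := by
  have hr : rPoly.natDegree = 20 := by
    rw [rPoly_eq_comp, natDegree_comp, natDegree_rOuter, natDegree_qPoly5]
  have hs : sPoly.natDegree = 20 := by
    rw [sPoly_eq_comp, natDegree_comp, natDegree_sOuter, natDegree_qPoly5]
  have hXs : (X * sPoly).natDegree = 21 := by
    rw [natDegree_X_mul (ne_zero_of_natDegree_gt (n := 0) (by lia)), hs]
  have hlow : (C 1 + X + C (1 / 2) * X ^ 2 + rPoly : ℚ[X]).natDegree ≤ 20 :=
    natDegree_add_le_of_degree_le (by compute_degree!) hr.le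
  rw [RPoly, natDegree_add_eq_right_of_natDegree_lt (by lia), hXs]

theorem X_sub_C_one_pow_three_dvd_rOuter : (X - C 1) ^ 3 ∣ rOuter :=
  ⟨C (125 / 384) * (C 3 * X ^ 2 + C 10 * X + C 3), Polynomial.funext fun x ↦ by
    simp only [rOuter, eval_mul, eval_add, eval_sub, eval_pow, eval_C, eval_X]
    ring⟩

theorem X_sub_C_one_sq_dvd_sOuter : (X - C 1) ^ 2 ∣ sOuter :=
  ⟨C (25 / 768) * (C 145 - C 97 * X + C 63 * X ^ 2 - C 15 * X ^ 3), Polynomial.funext fun x ↦ by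
    simp only [sOuter, eval_mul, eval_add, eval_sub, eval_pow, eval_C, eval_X]
    ring⟩

theorem nodeMoment_rOuter_add_nodeMoment_sOuter {i : ℕ} (hi : i ≤ 6) :
    (C 1 + X + C (1 / 2) * X ^ 2 : ℚ[X]).coeff i * i.factorial
      + nodeMoment rOuter (1 / 5) i + i * nodeMoment sOuter (1 / 5) (i - 1) = 1 := by
  rw [nodeMoment_eq_sum_range (natDegree_rOuter.trans_lt (Nat.lt_succ_self 5)),
    nodeMoment_eq_sum_range (natDegree_sOuter.trans_lt (Nat.lt_succ_self 5))]
  simp only [Finset.sum_range_succ, Finset.sum_range_zero, rOuter, sOuter, coeff_C_mul, coeff_add,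
    coeff_sub, coeff_X_pow, coeff_X, coeff_C]
  interval_cases i <;> norm_num [Nat.factorial]

/-- The stability function of the scheme as a function of the value `w` of the inner one-step
method on a substep of length `1/5`: `R` is the case `w = q(z/5)`. Power series are used so that
`w = exp(z/5)`, the exact inner flow, is also allowed. -/
noncomputable def correctedStability (w : ℚ⟦X⟧) : ℚ⟦X⟧ :=
  ((C 1 + X + C (1 / 2) * X ^ 2 : ℚ[X]) : ℚ⟦X⟧) + aeval w rOuter + PowerSeries.X * aeval w sOuter

theorem coe_RPoly_eq_correctedStability : (RPoly : ℚ⟦X⟧) = correctedStability qPoly5 := by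
  rw [RPoly, rPoly_eq_comp, sPoly_eq_comp, coe_add, coe_add, coe_mul, coe_X, coe_comp_eq_aeval,
    coe_comp_eq_aeval, correctedStability]

theorem X_pow_dvd_correctedStability_sub {v w : ℚ⟦X⟧} {n : ℕ} (hv : PowerSeries.X ∣ v - 1)
    (hw : PowerSeries.X ∣ w - 1) (hvw : PowerSeries.X ^ n ∣ v - w) :
    PowerSeries.X ^ (2 + n) ∣ correctedStability v - correctedStability w := by
  rw [← map_one (algebraMap ℚ ℚ⟦X⟧)] at hv hw
  have hr : PowerSeries.X ^ (2 + n) ∣ aeval v rOuter - aeval w rOuter :=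
    pow_add_dvd_aeval_sub_aeval X_sub_C_one_pow_three_dvd_rOuter hv hw hvw
  have hs : PowerSeries.X ^ (1 + n) ∣ aeval v sOuter - aeval w sOuter :=
    pow_add_dvd_aeval_sub_aeval X_sub_C_one_sq_dvd_sOuter hv hw hvw
  have hXs : PowerSeries.X ^ (2 + n) ∣
      PowerSeries.X * aeval v sOuter - PowerSeries.X * aeval w sOuter := by
    rw [← mul_sub, show 2 + n = (1 + n) + 1 by ring, pow_succ']
    exact mul_dvd_mul_left _ hs
  rw [correctedStability, correctedStability, add_sub_add_comm, add_sub_add_left_eq_sub]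
  exact dvd_add hr hXs

theorem coeff_correctedStability_rescale_exp {i : ℕ} (hi : i ≤ 6) :
    PowerSeries.coeff i (correctedStability (PowerSeries.rescale (1 / 5) (PowerSeries.exp ℚ))) =
      1 / i.factorial := by
  have hfactorial : (i.factorial : ℚ) ≠ 0 := Nat.cast_ne_zero.2 i.factorial_ne_zero
  rw [correctedStability, map_add, map_add, coeff_coe, coeff_aeval_rescale_exp,
    coeff_X_mul_aeval_rescale_exp, Algebra.algebraMap_self, RingHom.id_apply]
  field_simp
  linear_combination nodeMoment_rOuter_add_nodeMoment_sOuter hi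

theorem X_pow_five_dvd_qPoly5_sub_rescale_exp :
    PowerSeries.X ^ 5 ∣ (qPoly5 : ℚ⟦X⟧) - PowerSeries.rescale (1 / 5) (PowerSeries.exp ℚ) := by
  rw [PowerSeries.X_pow_dvd_iff]
  intro i hi
  rw [map_sub, coeff_coe, qPoly5, comp_C_mul_X_coeff, PowerSeries.coeff_rescale,
    PowerSeries.coeff_exp]
  simp only [qPoly, coeff_C_mul, coeff_add, coeff_X_pow, coeff_X, coeff_C]
  interval_cases i <;> norm_num [Nat.factorial]

theorem coeff_RPoly {i : ℕ} (hi : i ≤ 6) : RPoly.coeff i = 1 / (i.factorial : ℚ) := by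
  set expFifth : ℚ⟦X⟧ := PowerSeries.rescale (1 / 5) (PowerSeries.exp ℚ)
  have hexp : PowerSeries.X ∣ expFifth - 1 := X_dvd_rescale_exp_sub_one _
  have hq_exp : PowerSeries.X ^ 5 ∣ (qPoly5 : ℚ⟦X⟧) - expFifth :=
    X_pow_five_dvd_qPoly5_sub_rescale_exp
  have hq : PowerSeries.X ∣ (qPoly5 : ℚ⟦X⟧) - 1 := by
    simpa only [sub_add_sub_cancel] using
      dvd_add ((dvd_pow_self PowerSeries.X (by norm_num)).trans hq_exp) hexp
  have hR : PowerSeries.X ^ 7 ∣ (RPoly : ℚ⟦X⟧) - correctedStability expFifth :=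
    coe_RPoly_eq_correctedStability ▸ X_pow_dvd_correctedStability_sub hq hexp hq_exp
  have hcoeff := PowerSeries.X_pow_dvd_iff.1 hR i (Nat.lt_succ_of_le hi)
  rwa [map_sub, coeff_coe, coeff_correctedStability_rescale_exp hi, sub_eq_zero] at hcoeff

/-- The stability function `R` of DC6RK2/4 is a polynomial of degree 21,
and `R(z) − ∑_{i=0}^{6} z^i/i!` is divisible by `z^7`; equivalently, the coefficient of
`z^i` in `R` equals `1/i!` for every `i = 0, 1, …, 6`. -/
theorem dc6rk24_stability_polynomial :
    RPoly.natDegree = 21 ∧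
    (X ^ 7 : Polynomial ℚ) ∣
      (RPoly - ∑ i ∈ Finset.range 7, C (1 / (Nat.factorial i : ℚ)) * X ^ i) ∧
    (∀ i : ℕ, i ≤ 6 → RPoly.coeff i = 1 / (Nat.factorial i : ℚ)) := by
  exact ⟨natDegree_RPoly,
    X_pow_dvd_sub_sum_C_mul_X_pow_iff.2 fun _ hi ↦ coeff_RPoly (Nat.le_of_lt_succ hi),
    fun _ hi ↦ coeff_RPoly hi⟩
end

section
/- Define u : ℝ × ℝ → ℝ by u(x,t) = (1 + e^{x − 5t})^{−2}. Then u satisfies the Fisher equation ∂u/∂t(x,t) = ∂²u/∂x²(x,t) + 6·u(x,t)·(1 − u(x,t)) for all (x,t) ∈ ℝ², and u(x,0) = (1 + e^x)^{−2} for all x ∈ ℝ. -/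
/-- The travelling-wave function `u(x,t) = (1 + e^{x − 5t})^{−2}`. -/
noncomputable def fisherWave (x t : ℝ) : ℝ := ((1 + Real.exp (x - 5 * t)) ^ 2)⁻¹

/-!
The wave is `u(x,t) = σ(5t - x) ^ 2` with `σ` the logistic sigmoid. Since `σ' = σ(1 - σ)`, the
derivatives of `φ = σ ^ n` are polynomials in `σ`, and comparing coefficients gives
`(2n + 1) φ' = φ'' + n(n + 1)(σ ^ n - σ ^ (n + 2))`. For `n = 2` the reaction term is `6 φ(1 - φ)`
and the speed is `5`.
-/

open Real

section TravellingWave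

variable {𝕜 F : Type*} [NontriviallyNormedField 𝕜] [NormedAddCommGroup F] [NormedSpace 𝕜 F]

theorem deriv_comp_const_mul_sub_const (φ : 𝕜 → F) (c x t : 𝕜) :
    deriv (fun τ => φ (c * τ - x)) t = c • deriv φ (c * t - x) := by
  rw [deriv_comp_mul_left c (fun z => φ (z - x)), deriv_comp_sub_const]

theorem deriv_deriv_comp_const_sub (φ : 𝕜 → F) (a x : 𝕜) :
    deriv (deriv fun y => φ (a - y)) x = deriv (deriv φ) (a - x) := by
  simp only [funext (deriv_comp_const_sub φ a), deriv.fun_neg, deriv_comp_const_sub, neg_neg]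

theorem travellingWave_solves_reaction_diffusion {φ : 𝕜 → F} {c : 𝕜} {f : F → F}
    (hφ : ∀ z, c • deriv φ z = deriv (deriv φ) z + f (φ z)) (x t : 𝕜) :
    deriv (fun τ => φ (c * τ - x)) t =
      deriv (deriv fun y => φ (c * t - y)) x + f (φ (c * t - x)) := by
  rw [deriv_comp_const_mul_sub_const, deriv_deriv_comp_const_sub, hφ]

end TravellingWave

theorem hasDerivAt_sigmoid_pow (n : ℕ) (z : ℝ) :
    HasDerivAt (fun y => sigmoid y ^ n) (n * (sigmoid z ^ n - sigmoid z ^ (n + 1))) z := by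
  refine ((hasDerivAt_sigmoid z).fun_pow n).congr_deriv ?_
  cases n with
  | zero => simp
  | succ n => simp only [Nat.add_sub_cancel]; ring

theorem deriv_sigmoid_pow (n : ℕ) :
    deriv (fun y => sigmoid y ^ n) = fun z => n * (sigmoid z ^ n - sigmoid z ^ (n + 1)) :=
  funext fun z => (hasDerivAt_sigmoid_pow n z).deriv

theorem deriv_deriv_sigmoid_pow (n : ℕ) (z : ℝ) :
    deriv (deriv fun y => sigmoid y ^ n) z =
      n * (n * (sigmoid z ^ n - sigmoid z ^ (n + 1)) -
        (n + 1) * (sigmoid z ^ (n + 1) - sigmoid z ^ (n + 2))) := by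
  rw [deriv_sigmoid_pow]
  exact mod_cast (((hasDerivAt_sigmoid_pow n z).fun_sub
    (hasDerivAt_sigmoid_pow (n + 1) z)).const_mul (n : ℝ)).deriv

theorem sigmoid_pow_profile_equation (n : ℕ) (z : ℝ) :
    (2 * n + 1) * deriv (fun y => sigmoid y ^ n) z =
      deriv (deriv fun y => sigmoid y ^ n) z +
        n * (n + 1) * (sigmoid z ^ n - sigmoid z ^ (n + 2)) := by
  rw [deriv_deriv_sigmoid_pow, deriv_sigmoid_pow]
  ring

theorem sigmoid_sq_profile_equation (z : ℝ) :
    5 * deriv (fun y => sigmoid y ^ 2) z =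
      deriv (deriv fun y => sigmoid y ^ 2) z + 6 * sigmoid z ^ 2 * (1 - sigmoid z ^ 2) := by
  have profile := sigmoid_pow_profile_equation 2 z
  simp only [Nat.cast_ofNat] at profile
  linear_combination profile

theorem fisherWave_eq_sigmoid_sq (x t : ℝ) : fisherWave x t = sigmoid (5 * t - x) ^ 2 := by
  rw [fisherWave, sigmoid_def, neg_sub, inv_pow]

/-- The function `u(x,t) = (1 + e^{x − 5t})^{−2}` satisfies the Fisher
equation `∂u/∂t = ∂²u/∂x² + 6u(1 − u)` on all of `ℝ²`, with `u(x,0) = (1 + e^x)^{−2}`. -/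
theorem fisherWave_solves_fisher :
    (∀ x t : ℝ,
      deriv (fun τ => fisherWave x τ) t =
        deriv (deriv (fun y => fisherWave y t)) x
          + 6 * fisherWave x t * (1 - fisherWave x t)) ∧
    (∀ x : ℝ, fisherWave x 0 = ((1 + Real.exp x) ^ 2)⁻¹) := by
  constructor
  · simp only [fisherWave_eq_sigmoid_sq]
    exact travellingWave_solves_reaction_diffusion (φ := fun z => sigmoid z ^ 2)
      (f := fun u => 6 * u * (1 - u)) sigmoid_sq_profile_equation
  · intro x
    rw [fisherWave, mul_zero, sub_zero]
end
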